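/- arXiv:1708.04285 — 4 statements merged into one kernel-verified Lean document; each statement's English description precedes it below -/
import Mathlib

section
/- Let I, J ⊂ ℝ be nonempty bounded open intervals with disjoint closures, let ε > 0 and let h : ℝ → ℝ be measurable with ∫_J h(x)² dx < ∞. Define the functional 𝒢_ε(g) := ½ ∫_I ((H_J g)(x))² dx + ε · ‖g‖_{L²(J)} − ∫_J h(x) g(x) dx for measurable g : ℝ → ℝ with ∫_J g² < ∞. Then there exists a measurable ḡ with ∫_J ḡ² < ∞ such that 𝒢_ε(ḡ) ≤ 𝒢_ε(g) for all measurable g with ∫_J g² < ∞; moreover, any two such minimizers agree almost everywhere on J. -/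
/-!
On `L²(J)` the functional is `½‖T g‖² + ε‖g‖ - ⟪h, g⟫`, with `T : L²(J) → L²(I)` the truncated
Hilbert transform, which is bounded because `I` and `J` are at positive distance.

The key point is that `T` is injective (`ae_eq_zero_of_truncHilbert_ae_eq_zero`). If `H_J g = 0` almost
everywhere on `I`, then by continuity it vanishes on all of `I`, together with its derivatives, so that
`∫_J g(t) (x - t)^{-n} dt = 0` for all `n ≥ 1` at a point `x ∈ I`. The Weierstrass theorem in the variable
`(x - t)⁻¹` then gives `g = 0`.

Injectivity gives both halves of the theorem. The range of `T†` is dense, so `h` is within `ε / 2` of some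
`T† w`, and the functional is at least `(ε / 2)‖g‖ - ½‖w‖²` (`tikhonov_coercive`). Being convex, continuous
and coercive, it attains its infimum, since nested bounded closed convex sets in a Hilbert space have a
common point (`exists_mem_iInter_of_antitone_convex`). Strict convexity of `‖T g‖²` along directions
where `T g` changes gives uniqueness (`tikhonov_min_unique`).
-/

open MeasureTheory Set

/-- Truncated Hilbert transform: `(H_K f)(x) = ∫_K f(t)/(x - t) dt`. -/
noncomputable def truncHilbert (K : Set ℝ) (f : ℝ → ℝ) (x : ℝ) : ℝ :=
  ∫ t in K, f t / (x - t)

/-- The functional `𝒢_ε(g) = ½ ∫_I (H_J g)² + ε‖g‖_{L²(J)} − ∫_J h g`. -/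
noncomputable def Gfun (I J : Set ℝ) (ε : ℝ) (h g : ℝ → ℝ) : ℝ :=
  (1 / 2) * (∫ x in I, (truncHilbert J g x) ^ 2) +
    ε * Real.sqrt (∫ t in J, (g t) ^ 2) - ∫ t in J, h t * g t

/-! ### Minimization in Hilbert spaces -/

section Abstract

variable {X Y : Type*} [NormedAddCommGroup X] [InnerProductSpace ℝ X]
  [NormedAddCommGroup Y] [InnerProductSpace ℝ Y]

/-- A decreasing sequence of nonempty closed convex sets in a Hilbert space, the first of them
bounded, has a common point: the elements of minimal norm form a Cauchy sequence. This replaces weak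
compactness in the existence proof. -/
theorem exists_mem_iInter_of_antitone_convex [CompleteSpace X] (C : ℕ → Set X) (hanti : Antitone C)
    (hne : ∀ n, (C n).Nonempty) (hcl : ∀ n, IsClosed (C n)) (hconv : ∀ n, Convex ℝ (C n))
    (R : ℝ) (hR : ∀ x ∈ C 0, ‖x‖ ≤ R) : ∃ x, ∀ n, x ∈ C n := by
  have hproj : ∀ n, ∃ v ∈ C n, ∀ w ∈ C n, ‖v‖ ≤ ‖w‖ := by
    intro n
    obtain ⟨v, hv, hveq⟩ :=
      exists_norm_eq_iInf_of_complete_convex (hne n) (hcl n).isComplete (hconv n) 0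
    refine ⟨v, hv, fun w hw => ?_⟩
    have hle : (⨅ w : C n, ‖(0 : X) - w‖) ≤ ‖(0 : X) - w‖ :=
      ciInf_le ⟨0, by rintro _ ⟨y, rfl⟩; exact norm_nonneg _⟩ (⟨w, hw⟩ : C n)
    rw [← hveq] at hle
    simpa using hle
  choose x hx hmin using hproj
  have hmono : Monotone fun n => ‖x n‖ ^ 2 := fun m n hmn => by
    have := hmin m (x n) (hanti hmn (hx n))
    dsimp only
    gcongr
  have hbdd : BddAbove (range fun n => ‖x n‖ ^ 2) := by
    refine ⟨R ^ 2, ?_⟩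
    rintro _ ⟨n, rfl⟩
    have := hR _ (hanti (Nat.zero_le n) (hx n))
    dsimp only
    gcongr
  have hcau : CauchySeq fun n => ‖x n‖ ^ 2 := (tendsto_atTop_ciSup hmono hbdd).cauchySeq
  -- the midpoint of `x m` and `x n` lies in `C m`, so the parallelogram law controls `x n - x m`
  have hpar : ∀ m n, m ≤ n → ‖x n - x m‖ ^ 2 ≤ 2 * (‖x n‖ ^ 2 - ‖x m‖ ^ 2) := by
    intro m n hmn
    have hmid : (1 / 2 : ℝ) • x n + (1 / 2 : ℝ) • x m ∈ C m :=
      hconv m (hanti hmn (hx n)) (hx m) (by norm_num) (by norm_num) (by norm_num)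
    have h1 := hmin m _ hmid
    rw [← smul_add, norm_smul] at h1
    norm_num at h1
    have h2 := parallelogram_law_with_norm ℝ (x n) (x m)
    have h3 := norm_nonneg (x m)
    nlinarith
  have hx_cau : CauchySeq x := by
    rw [Metric.cauchySeq_iff'] at hcau ⊢
    intro ε hε
    obtain ⟨N, hN⟩ := hcau (ε ^ 2 / 2) (by positivity)
    refine ⟨N, fun n hn => ?_⟩
    have h1 := hN n hn
    rw [Real.dist_eq] at h1
    have h2 := hpar N n hn
    rw [dist_eq_norm]
    have h3 := le_abs_self (‖x n‖ ^ 2 - ‖x N‖ ^ 2)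
    exact lt_of_pow_lt_pow_left₀ 2 hε.le (by linarith)
  obtain ⟨y, hy⟩ := cauchySeq_tendsto_of_complete hx_cau
  refine ⟨y, fun n => (hcl n).mem_of_tendsto hy ?_⟩
  filter_upwards [Filter.eventually_ge_atTop n] with k hk using hanti hk (hx k)

/-- The functional `x ↦ ½‖T x‖² + ε‖x‖ - ⟪h, x⟫` attached to a bounded operator `T` between Hilbert
spaces. The penalty is the norm itself, not its square. -/
noncomputable def tikhonov (T : X →L[ℝ] Y) (ε : ℝ) (h x : X) : ℝ :=
  1 / 2 * ‖T x‖ ^ 2 + ε * ‖x‖ - inner ℝ h x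

/-- Injectivity of `T` makes the range of `T†` dense; writing `h = T† w + r` with `‖r‖ < ε / 2`, the
term `⟪w, T x⟫` is absorbed by `½‖T x‖²` and `⟪r, x⟫` by half of `ε‖x‖`. -/
theorem tikhonov_coercive [CompleteSpace X] [CompleteSpace Y] (T : X →L[ℝ] Y)
    (hT : Function.Injective T) {ε : ℝ} (hε : 0 < ε) (h : X) :
    ∃ K : ℝ, ∀ x, ε / 2 * ‖x‖ - K ≤ tikhonov T ε h x := by
  have hdense : (ContinuousLinearMap.adjoint T).range.topologicalClosure = ⊤ := by
    rw [Submodule.topologicalClosure_eq_top_iff, ContinuousLinearMap.orthogonal_range,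
      ContinuousLinearMap.adjoint_adjoint]
    exact LinearMap.ker_eq_bot.2 hT
  have hmem : h ∈ closure ((ContinuousLinearMap.adjoint T).range : Set X) := by
    rw [← Submodule.topologicalClosure_coe, hdense]; trivial
  obtain ⟨_, ⟨w, rfl⟩, hw⟩ := Metric.mem_closure_iff.1 hmem (ε / 2) (by positivity)
  refine ⟨1 / 2 * ‖w‖ ^ 2, fun x => ?_⟩
  rw [dist_eq_norm] at hw
  have h1 : inner ℝ h x = inner ℝ (h - ContinuousLinearMap.adjoint T w) x + inner ℝ w (T x) := by
    rw [← ContinuousLinearMap.adjoint_inner_left, ← inner_add_left]; simp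
  have h2 := real_inner_le_norm (h - ContinuousLinearMap.adjoint T w) x
  have h3 := real_inner_le_norm w (T x)
  have h4 : ‖h - ContinuousLinearMap.adjoint T w‖ * ‖x‖ ≤ ε / 2 * ‖x‖ := by
    gcongr; exact hw.le
  unfold tikhonov
  nlinarith [sq_nonneg (‖w‖ - ‖T x‖)]

theorem tikhonov_continuous (T : X →L[ℝ] Y) (ε : ℝ) (h : X) : Continuous (tikhonov T ε h) := by
  unfold tikhonov; fun_prop

theorem tikhonov_convexOn (T : X →L[ℝ] Y) {ε : ℝ} (hε : 0 < ε) (h : X) :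
    ConvexOn ℝ univ (tikhonov T ε h) := by
  have h1 : ConvexOn ℝ univ (fun x : X => ‖T x‖ ^ 2) :=
    ((convexOn_norm (convex_univ (E := Y) (𝕜 := ℝ))).pow (fun _ _ => norm_nonneg _) 2).comp_linearMap
      (T : X →ₗ[ℝ] Y)
  have h2 : ConvexOn ℝ univ (fun x : X => ‖x‖) := convexOn_norm convex_univ
  have h3 : ConcaveOn ℝ univ (fun x : X => inner ℝ h x) :=
    (innerSL ℝ h : X →ₗ[ℝ] ℝ).concaveOn convex_univ
  exact ((h1.smul (by norm_num : (0 : ℝ) ≤ 1 / 2)).add (h2.smul hε.le)).sub h3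

theorem tikhonov_exists_min [CompleteSpace X] [CompleteSpace Y] (T : X →L[ℝ] Y)
    (hT : Function.Injective T) {ε : ℝ} (hε : 0 < ε) (h : X) :
    ∃ x₀, ∀ x, tikhonov T ε h x₀ ≤ tikhonov T ε h x := by
  obtain ⟨K, hK⟩ := tikhonov_coercive T hT hε h
  set F := tikhonov T ε h
  have hbdd : BddBelow (range F) := by
    refine ⟨-K, ?_⟩
    rintro _ ⟨x, rfl⟩
    have : 0 ≤ ε / 2 * ‖x‖ := by positivity
    linarith [hK x]
  set m := ⨅ x, F x
  obtain ⟨x₀, hx₀⟩ := exists_mem_iInter_of_antitone_convex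
    (fun n : ℕ => {x | F x ≤ m + 1 / (n + 1)})
    (fun i j hij x hx => by
      have : (1 : ℝ) / (j + 1) ≤ 1 / (i + 1) := Nat.one_div_le_one_div hij
      simp only [mem_ofPred_eq] at hx ⊢; linarith)
    (fun n => by
      obtain ⟨x, hx⟩ := exists_lt_of_ciInf_lt (f := F) (a := m + 1 / ((n : ℝ) + 1))
        (by have : (0 : ℝ) < 1 / (n + 1) := by positivity
            change m < _; linarith)
      exact ⟨x, hx.le⟩)
    (fun n => isClosed_le (tikhonov_continuous T ε h) continuous_const)
    (fun n => by simpa using (tikhonov_convexOn T hε h).convex_le (m + 1 / (n + 1)))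
    ((m + 1 + K) / (ε / 2))
    (fun x hx => by
      rw [le_div_iff₀ (by positivity)]
      have := hK x
      simp only [mem_ofPred_eq] at hx
      norm_num at hx
      linarith)
  refine ⟨x₀, fun x => ?_⟩
  have hle : F x₀ ≤ m := by
    have ht : Filter.Tendsto (fun n : ℕ => m + 1 / ((n : ℝ) + 1)) Filter.atTop (nhds (m + 0)) :=
      tendsto_const_nhds.add tendsto_one_div_add_atTop_nhds_zero_nat
    rw [add_zero] at ht
    exact ge_of_tendsto' ht hx₀
  exact hle.trans (ciInf_le hbdd x)

/-- At the midpoint of two minimizers `x`, `y`, the quadratic term gains `⅛‖T x - T y‖²`, so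
`T x = T y`. -/
theorem tikhonov_min_unique (T : X →L[ℝ] Y) (hT : Function.Injective T) {ε : ℝ} (hε : 0 < ε)
    (h : X) {x y : X} (hx : ∀ z, tikhonov T ε h x ≤ tikhonov T ε h z)
    (hy : ∀ z, tikhonov T ε h y ≤ tikhonov T ε h z) : x = y := by
  have hm := hx ((1 / 2 : ℝ) • (x + y))
  have hxy := hx y
  have hyx := hy x
  have hpar := parallelogram_law_with_norm ℝ (T x) (T y)
  have htri := norm_add_le x y
  unfold tikhonov at hm hxy hyx
  rw [map_smul, norm_smul, norm_smul, inner_smul_right, inner_add_right, map_add] at hm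
  norm_num at hm
  have h1 : ε * ‖x + y‖ ≤ ε * (‖x‖ + ‖y‖) := by gcongr
  have h0 : ‖T x - T y‖ ^ 2 ≤ 0 := by nlinarith
  have h5 : ‖T x - T y‖ = 0 := by
    have := sq_nonneg ‖T x - T y‖
    exact pow_eq_zero_iff (two_ne_zero) |>.1 (le_antisymm h0 this)
  exact hT (sub_eq_zero.1 (norm_eq_zero.1 h5))

end Abstract

/-! ### Injectivity of the truncated Hilbert transform -/

theorem exists_separation {a b c d : ℝ} (hab : a < b) (hcd : c < d)
    (hdisj : Disjoint (closure (Ioo a b)) (closure (Ioo c d))) :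
    ∃ δ > 0, ∀ x ∈ Ioo a b, ∀ t ∈ Icc c d, δ ≤ |x - t| := by
  rw [closure_Ioo hab.ne, closure_Ioo hcd.ne, Set.disjoint_left] at hdisj
  have h : b < c ∨ d < a := by
    by_contra! hcon
    exact hdisj (a := max a c) ⟨le_max_left _ _, max_le hab.le hcon.1⟩
      ⟨le_max_right _ _, max_le hcon.2 hcd.le⟩
  rcases h with h | h
  · refine ⟨c - b, by linarith, fun x hx t ht => ?_⟩
    rw [abs_sub_comm]
    exact le_trans (by linarith [hx.2, ht.1]) (le_abs_self _)
  · exact ⟨a - d, by linarith, fun x hx t ht =>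
      le_trans (by linarith [hx.1, ht.2]) (le_abs_self _)⟩

theorem integrable_div_pow {c d δ x : ℝ} (hδ : 0 < δ) (hx : ∀ t ∈ Icc c d, δ ≤ |x - t|)
    {g : ℝ → ℝ} (hg : IntegrableOn g (Ioo c d)) (n : ℕ) :
    IntegrableOn (fun t => g t / (x - t) ^ n) (Ioo c d) := by
  refine Integrable.mono' (hg.norm.const_mul ((δ ^ n)⁻¹)) ?_ ?_
  · exact (hg.aestronglyMeasurable.aemeasurable.div
      (Measurable.aemeasurable (by fun_prop))).aestronglyMeasurable
  · filter_upwards [ae_restrict_mem measurableSet_Ioo] with t ht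
    rw [norm_div, norm_pow, Real.norm_eq_abs (x - t), div_eq_inv_mul]
    have := hx t (Ioo_subset_Icc_self ht)
    gcongr

theorem hasDerivAt_integral_div_pow {a b c d δ : ℝ} (hδ : 0 < δ)
    (hsep : ∀ x ∈ Ioo a b, ∀ t ∈ Icc c d, δ ≤ |x - t|)
    {g : ℝ → ℝ} (hg : IntegrableOn g (Ioo c d)) (n : ℕ) {x : ℝ} (hx : x ∈ Ioo a b) :
    HasDerivAt (fun y => ∫ t in Ioo c d, g t / (y - t) ^ (n + 1))
      (∫ t in Ioo c d, -((n : ℝ) + 1) * (g t / (x - t) ^ (n + 2))) x := by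
  refine (hasDerivAt_integral_of_dominated_loc_of_deriv_le (μ := volume.restrict (Ioo c d))
    (F := fun y t => g t / (y - t) ^ (n + 1))
    (F' := fun y t => -((n : ℝ) + 1) * (g t / (y - t) ^ (n + 2)))
    (bound := fun t => ((n : ℝ) + 1) * ((δ ^ (n + 2))⁻¹ * ‖g t‖))
    (isOpen_Ioo.mem_nhds hx) ?_ ?_ ?_ ?_ ?_ ?_).2
  · filter_upwards [isOpen_Ioo.mem_nhds hx] with y hy
    exact (integrable_div_pow hδ (hsep y hy) hg _).aestronglyMeasurable
  · exact integrable_div_pow hδ (hsep x hx) hg _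
  · exact ((integrable_div_pow hδ (hsep x hx) hg _).const_mul _).aestronglyMeasurable
  · filter_upwards [ae_restrict_mem measurableSet_Ioo] with t ht y hy
    have := hsep y hy t (Ioo_subset_Icc_self ht)
    rw [norm_mul, norm_neg, Real.norm_of_nonneg (by positivity : (0 : ℝ) ≤ (n : ℝ) + 1),
      norm_div, norm_pow, Real.norm_eq_abs (y - t), div_eq_inv_mul]
    gcongr
  · exact (hg.norm.const_mul _).const_mul _
  · filter_upwards [ae_restrict_mem measurableSet_Ioo] with t ht y hy
    have hne : y - t ≠ 0 :=
      abs_pos.1 (hδ.trans_le (hsep y hy t (Ioo_subset_Icc_self ht)))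
    have h1 : HasDerivAt (fun y => (y - t) ^ (n + 1)) (((n + 1 : ℕ) : ℝ) * (y - t) ^ n * 1) y :=
      ((hasDerivAt_id y).sub_const t).pow (n + 1)
    have h2 := (hasDerivAt_const y (g t)).div h1 (pow_ne_zero _ hne)
    refine h2.congr_deriv ?_
    push_cast
    field_simp
    ring

/-- If `H_J g` vanishes on an interval, so do all its derivatives there, i.e. all the integrals
`∫_J g(t) (x - t)^{-(n+1)} dt`. -/
theorem integral_div_pow_eq_zero {a b c d δ : ℝ} (hδ : 0 < δ)
    (hsep : ∀ x ∈ Ioo a b, ∀ t ∈ Icc c d, δ ≤ |x - t|)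
    {g : ℝ → ℝ} (hg : IntegrableOn g (Ioo c d))
    (h0 : ∀ x ∈ Ioo a b, truncHilbert (Ioo c d) g x = 0) (n : ℕ) :
    ∀ x ∈ Ioo a b, ∫ t in Ioo c d, g t / (x - t) ^ (n + 1) = 0 := by
  induction n with
  | zero => simpa [truncHilbert] using h0
  | succ n ih =>
    intro x hx
    have h1 := hasDerivAt_integral_div_pow hδ hsep hg n hx
    have h2 : HasDerivAt (fun y => ∫ t in Ioo c d, g t / (y - t) ^ (n + 1)) 0 x := by
      refine (hasDerivAt_const x (0 : ℝ)).congr_of_eventuallyEq ?_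
      filter_upwards [isOpen_Ioo.mem_nhds hx] with y hy using ih y hy
    have h3 := h1.unique h2
    rw [integral_const_mul] at h3
    have h4 : (-((n : ℝ) + 1)) ≠ 0 := by
      have : (0 : ℝ) < n + 1 := by positivity
      linarith
    exact (mul_eq_zero.1 h3).resolve_left h4

/-- Vanishing of the integrals of `g` against all positive powers of `s(t) = (x - t)⁻¹`, at a single
point `x` outside `[c, d]`, forces `g = 0`: `g s` is orthogonal to all polynomials in `s`. Since `s` is
a homeomorphism of `[c, d]` onto a compact interval, the Weierstrass theorem makes `g s` orthogonal to
all continuous functions. -/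
theorem ae_eq_zero_of_integral_div_pow {c d δ x : ℝ} (hcd : c < d) (hδ : 0 < δ)
    (hx : ∀ t ∈ Icc c d, δ ≤ |x - t|) {g : ℝ → ℝ} (hg : IntegrableOn g (Ioo c d))
    (h0 : ∀ n : ℕ, ∫ t in Ioo c d, g t / (x - t) ^ (n + 1) = 0) :
    g =ᵐ[volume.restrict (Ioo c d)] 0 := by
  have hne : ∀ t ∈ Icc c d, x - t ≠ 0 := fun t ht => abs_pos.1 (hδ.trans_le (hx t ht))
  have hG : IntegrableOn (fun t => g t / (x - t)) (Ioo c d) := by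
    simpa using integrable_div_pow hδ hx hg 1
  have hpoly : ∀ p : Polynomial ℝ,
      IntegrableOn (fun t => p.eval (x - t)⁻¹ * (g t / (x - t))) (Ioo c d) ∧
        ∫ t in Ioo c d, p.eval (x - t)⁻¹ * (g t / (x - t)) = 0 := by
    intro p
    induction p using Polynomial.induction_on' with
    | add p q hp hq =>
      simp only [Polynomial.eval_add, add_mul]
      exact ⟨hp.1.add hq.1, by rw [integral_add hp.1 hq.1, hp.2, hq.2, add_zero]⟩
    | monomial n r =>
      have : (fun t => (Polynomial.monomial n r).eval (x - t)⁻¹ * (g t / (x - t))) =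
          fun t => r * (g t / (x - t) ^ (n + 1)) := by
        funext t
        rw [Polynomial.eval_monomial, pow_succ, inv_pow]
        simp only [div_eq_mul_inv, mul_inv]
        ring
      rw [this]
      exact ⟨(integrable_div_pow hδ hx hg _).const_mul r, by
        rw [integral_const_mul, h0, mul_zero]⟩
  -- on either side of `[c, d]` the change of variable `t ↦ (x - t)⁻¹` is increasing
  have hside : ∀ t ∈ Icc c d, (x - t)⁻¹ ∈ Icc (x - c)⁻¹ (x - d)⁻¹ := by
    intro t ht
    by_cases hxc : x < c
    · exact ⟨(inv_le_inv_of_neg (by linarith) (by linarith [ht.1])).2 (by linarith [ht.1]),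
        (inv_le_inv_of_neg (by linarith [ht.1]) (by linarith)).2 (by linarith [ht.2])⟩
    · have hxd : d < x := by
        by_contra! hcon
        exact hne x ⟨not_lt.1 hxc, hcon⟩ (sub_self x)
      exact ⟨inv_anti₀ (by linarith [ht.2]) (by linarith [ht.1]),
        inv_anti₀ (by linarith) (by linarith [ht.2])⟩
  have hnz : ∀ u ∈ Icc (x - c)⁻¹ (x - d)⁻¹, u ≠ 0 := by
    rintro u ⟨hu1, hu2⟩ rfl
    have h1 : x - c ≤ 0 := inv_nonpos.1 hu1
    have h2 : 0 ≤ x - d := inv_nonneg.1 hu2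
    linarith
  have hcont : ∀ φ : ℝ → ℝ, Continuous φ → ∫ t in Ioo c d, φ t * (g t / (x - t)) = 0 := by
    intro φ hφ
    set M := ∫ t in Ioo c d, |g t / (x - t)| with hM
    have hM0 : 0 ≤ M := integral_nonneg fun t => abs_nonneg _
    refine abs_eq_zero.1 (le_antisymm (le_of_forall_pos_le_add fun η hη => ?_) (abs_nonneg _))
    obtain ⟨p, hp⟩ := exists_polynomial_near_of_continuousOn (x - c)⁻¹ (x - d)⁻¹
      (fun u => φ (x - u⁻¹))
      (hφ.comp_continuousOn (continuousOn_const.sub (continuousOn_id.inv₀ hnz)))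
      (η / (M + 1)) (by positivity)
    have hclose : ∀ t ∈ Ioo c d, |φ t - p.eval (x - t)⁻¹| ≤ η / (M + 1) := by
      intro t ht
      have := (hp _ (hside t (Ioo_subset_Icc_self ht))).le
      rw [abs_sub_comm]
      simpa using this
    have hdom : ∀ᵐ t ∂volume.restrict (Ioo c d),
        ‖(φ t - p.eval (x - t)⁻¹) * (g t / (x - t))‖ ≤ η / (M + 1) * |g t / (x - t)| := by
      filter_upwards [ae_restrict_mem measurableSet_Ioo] with t ht
      rw [norm_mul, Real.norm_eq_abs, Real.norm_eq_abs]
      exact mul_le_mul_of_nonneg_right (hclose t ht) (abs_nonneg _)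
    have hint : IntegrableOn (fun t => (φ t - p.eval (x - t)⁻¹) * (g t / (x - t))) (Ioo c d) := by
      refine Integrable.mono' (hG.abs.const_mul _) ?_ hdom
      refine AEStronglyMeasurable.mul ?_ hG.aestronglyMeasurable
      refine (hφ.measurable.sub (p.continuous.measurable.comp ?_)).aestronglyMeasurable
      fun_prop
    have heq : ∫ t in Ioo c d, φ t * (g t / (x - t)) =
        ∫ t in Ioo c d, (φ t - p.eval (x - t)⁻¹) * (g t / (x - t)) := by
      have := integral_add hint (hpoly p).1
      rw [(hpoly p).2, add_zero] at this
      rw [← this]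
      congr 1; funext t; ring
    rw [heq, zero_add]
    calc |∫ t in Ioo c d, (φ t - p.eval (x - t)⁻¹) * (g t / (x - t))|
        ≤ ∫ t in Ioo c d, η / (M + 1) * |g t / (x - t)| :=
          norm_integral_le_of_norm_le (hG.abs.const_mul _) hdom
      _ = η / (M + 1) * M := by rw [integral_const_mul]
      _ ≤ η := by
          rw [div_mul_eq_mul_div, div_le_iff₀ (by positivity)]
          nlinarith
  have hae := isOpen_Ioo.ae_eq_zero_of_integral_contDiff_smul_eq_zero
    (μ := volume.restrict (Ioo c d)) (U := Ioo c d) (f := fun t => g t / (x - t))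
    (hG.integrable.locallyIntegrable.locallyIntegrableOn _)
    (fun φ hφ _ _ => by simpa using hcont φ hφ.continuous)
  filter_upwards [hae, ae_restrict_mem measurableSet_Ioo] with t ht htm
  exact (div_eq_zero_iff.1 (ht htm)).resolve_right (hne t (Ioo_subset_Icc_self htm))

theorem continuousOn_truncHilbert {a b c d δ : ℝ} (hδ : 0 < δ)
    (hsep : ∀ x ∈ Ioo a b, ∀ t ∈ Icc c d, δ ≤ |x - t|)
    {g : ℝ → ℝ} (hg : IntegrableOn g (Ioo c d)) :
    ContinuousOn (truncHilbert (Ioo c d) g) (Ioo a b) := fun x hx => by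
  have := (hasDerivAt_integral_div_pow hδ hsep hg 0 hx).continuousAt.continuousWithinAt
    (s := Ioo a b)
  simp only [zero_add, pow_one] at this
  exact this

/-- The truncated Hilbert transform of a nonzero function cannot vanish almost everywhere on an open
interval at positive distance from `J`. -/
theorem ae_eq_zero_of_truncHilbert_ae_eq_zero {a b c d δ : ℝ} (hab : a < b) (hcd : c < d)
    (hδ : 0 < δ) (hsep : ∀ x ∈ Ioo a b, ∀ t ∈ Icc c d, δ ≤ |x - t|)
    {g : ℝ → ℝ} (hg : IntegrableOn g (Ioo c d))
    (h0 : truncHilbert (Ioo c d) g =ᵐ[volume.restrict (Ioo a b)] 0) :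
    g =ᵐ[volume.restrict (Ioo c d)] 0 := by
  have hall : EqOn (truncHilbert (Ioo c d) g) 0 (Ioo a b) :=
    Measure.eqOn_open_of_ae_eq h0 isOpen_Ioo (continuousOn_truncHilbert hδ hsep hg)
      continuousOn_const
  have hmid : (a + b) / 2 ∈ Ioo a b := ⟨by linarith, by linarith⟩
  exact ae_eq_zero_of_integral_div_pow hcd hδ (hsep _ hmid) hg fun n =>
    integral_div_pow_eq_zero hδ hsep hg hall n _ hmid

theorem truncHilbert_congr {K : Set ℝ} {f g : ℝ → ℝ} (hfg : f =ᵐ[volume.restrict K] g) :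
    truncHilbert K f = truncHilbert K g := by
  funext x
  refine integral_congr_ae ?_
  filter_upwards [hfg] with t ht
  rw [ht]

theorem abs_truncHilbert_le {c d δ x : ℝ} (hδ : 0 < δ) (hx : ∀ t ∈ Icc c d, δ ≤ |x - t|)
    {g : ℝ → ℝ} (hg : IntegrableOn g (Ioo c d)) :
    |truncHilbert (Ioo c d) g x| ≤ δ⁻¹ * ∫ t in Ioo c d, |g t| := by
  rw [← integral_const_mul, truncHilbert, ← Real.norm_eq_abs]
  refine norm_integral_le_of_norm_le (hg.abs.const_mul _) ?_
  filter_upwards [ae_restrict_mem measurableSet_Ioo] with t ht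
  rw [norm_div, Real.norm_eq_abs, Real.norm_eq_abs, div_eq_inv_mul]
  have := hx t (Ioo_subset_Icc_self ht)
  gcongr

/-! ### The truncated Hilbert transform as an operator on `L²` -/

section Operator

theorem Lp_two_integrableOn {c d : ℝ} (u : Lp ℝ 2 (volume.restrict (Ioo c d))) :
    IntegrableOn u (Ioo c d) :=
  (Lp.memLp u).integrable (by norm_num)

theorem memLp_truncHilbert {a b c d δ : ℝ} (hδ : 0 < δ)
    (hsep : ∀ x ∈ Ioo a b, ∀ t ∈ Icc c d, δ ≤ |x - t|)
    {g : ℝ → ℝ} (hg : IntegrableOn g (Ioo c d)) :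
    MemLp (truncHilbert (Ioo c d) g) 2 (volume.restrict (Ioo a b)) := by
  refine MemLp.of_bound
    ((continuousOn_truncHilbert hδ hsep hg).aestronglyMeasurable measurableSet_Ioo)
    (δ⁻¹ * ∫ t in Ioo c d, |g t|) ?_
  filter_upwards [ae_restrict_mem measurableSet_Ioo] with x hx
  exact abs_truncHilbert_le hδ (hsep x hx) hg

theorem L2_norm_sq {μ : Measure ℝ} (u : Lp ℝ 2 μ) : ‖u‖ ^ 2 = ∫ t, (u t) ^ 2 ∂μ := by
  rw [← real_inner_self_eq_norm_sq, L2.inner_def]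
  simp [pow_two]

theorem integral_abs_le_norm {c d : ℝ} (u : Lp ℝ 2 (volume.restrict (Ioo c d))) :
    ∫ t in Ioo c d, |u t| ≤ √(volume.real (Ioo c d)) * ‖u‖ := by
  have h1 := integral_mul_le_Lp_mul_Lq_of_nonneg (μ := volume.restrict (Ioo c d))
    Real.HolderConjugate.two_two (f := fun _ => (1 : ℝ)) (g := fun t => |u t|)
    (Filter.Eventually.of_forall fun _ => zero_le_one)
    (Filter.Eventually.of_forall fun _ => abs_nonneg _)
    (by simpa using memLp_const (1 : ℝ)) (by simpa using (Lp.memLp u).norm)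
  rw [← Real.sqrt_sq (norm_nonneg u), L2_norm_sq, Real.sqrt_eq_rpow, Real.sqrt_eq_rpow]
  simpa using h1

/-- The truncated Hilbert transform as a bounded operator `L²(c, d) → L²(a, b)`. -/
noncomputable def hilbertOp {a b c d δ : ℝ} (hδ : 0 < δ)
    (hsep : ∀ x ∈ Ioo a b, ∀ t ∈ Icc c d, δ ≤ |x - t|) :
    Lp ℝ 2 (volume.restrict (Ioo c d)) →L[ℝ] Lp ℝ 2 (volume.restrict (Ioo a b)) :=
  LinearMap.mkContinuous
    { toFun := fun u => (memLp_truncHilbert hδ hsep (Lp_two_integrableOn u)).toLp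
      map_add' := fun u v => by
        rw [← MemLp.toLp_add]
        refine MemLp.toLp_congr _ _ ?_
        filter_upwards [ae_restrict_mem measurableSet_Ioo] with x hx
        rw [truncHilbert_congr (Lp.coeFn_add u v)]
        have hu := integrable_div_pow hδ (hsep x hx) (Lp_two_integrableOn u) 1
        have hv := integrable_div_pow hδ (hsep x hx) (Lp_two_integrableOn v) 1
        simp only [pow_one] at hu hv
        simp only [truncHilbert, Pi.add_apply, add_div]
        exact integral_add hu hv
      map_smul' := fun r u => by
        rw [RingHom.id_apply, ← MemLp.toLp_const_smul]
        refine MemLp.toLp_congr _ _ (Filter.Eventually.of_forall fun x => ?_)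
        rw [truncHilbert_congr (Lp.coeFn_smul r u)]
        simp only [truncHilbert, Pi.smul_apply, smul_eq_mul, mul_div_assoc]
        exact integral_const_mul _ _ }
    ((measureUnivNNReal (volume.restrict (Ioo a b)) : ℝ) ^ (2 : ENNReal).toReal⁻¹ *
      (δ⁻¹ * √(volume.real (Ioo c d))))
    (fun u => by
      rw [mul_assoc, mul_assoc]
      refine Lp.norm_le_of_ae_bound (by positivity) ?_
      filter_upwards [MemLp.coeFn_toLp (memLp_truncHilbert hδ hsep (Lp_two_integrableOn u)),
        ae_restrict_mem measurableSet_Ioo] with x hx hxm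
      simp only [LinearMap.coe_mk, AddHom.coe_mk]
      rw [hx]
      refine (abs_truncHilbert_le hδ (hsep x hxm) (Lp_two_integrableOn u)).trans ?_
      have := integral_abs_le_norm u
      gcongr)

theorem hilbertOp_coeFn {a b c d δ : ℝ} (hδ : 0 < δ)
    (hsep : ∀ x ∈ Ioo a b, ∀ t ∈ Icc c d, δ ≤ |x - t|)
    (u : Lp ℝ 2 (volume.restrict (Ioo c d))) :
    hilbertOp hδ hsep u =ᵐ[volume.restrict (Ioo a b)] truncHilbert (Ioo c d) u :=
  MemLp.coeFn_toLp (memLp_truncHilbert hδ hsep (Lp_two_integrableOn u))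

theorem hilbertOp_injective {a b c d δ : ℝ} (hab : a < b) (hcd : c < d) (hδ : 0 < δ)
    (hsep : ∀ x ∈ Ioo a b, ∀ t ∈ Icc c d, δ ≤ |x - t|) :
    Function.Injective (hilbertOp hδ hsep) := by
  refine (injective_iff_map_eq_zero _).2 fun u hu => ?_
  refine (Lp.eq_zero_iff_ae_eq_zero).2 ?_
  refine ae_eq_zero_of_truncHilbert_ae_eq_zero hab hcd hδ hsep (Lp_two_integrableOn u) ?_
  exact (hilbertOp_coeFn hδ hsep u).symm.trans ((Lp.eq_zero_iff_ae_eq_zero).1 hu)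

/-- `𝒢_ε` is the abstract functional `tikhonov` for the operator `hilbertOp`, read on
representatives. -/
theorem Gfun_eq_tikhonov {a b c d δ : ℝ} (hδ : 0 < δ)
    (hsep : ∀ x ∈ Ioo a b, ∀ t ∈ Icc c d, δ ≤ |x - t|) (ε : ℝ) {h g : ℝ → ℝ}
    (hh : MemLp h 2 (volume.restrict (Ioo c d))) (hg : MemLp g 2 (volume.restrict (Ioo c d))) :
    Gfun (Ioo a b) (Ioo c d) ε h g = tikhonov (hilbertOp hδ hsep) ε hh.toLp hg.toLp := by
  have h1 : ∫ x in Ioo a b, truncHilbert (Ioo c d) g x ^ 2 = ‖hilbertOp hδ hsep hg.toLp‖ ^ 2 := by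
    rw [L2_norm_sq]
    refine integral_congr_ae ?_
    filter_upwards [hilbertOp_coeFn hδ hsep hg.toLp] with x hx
    rw [hx, truncHilbert_congr hg.coeFn_toLp]
  have h2 : √(∫ t in Ioo c d, g t ^ 2) = ‖hg.toLp‖ := by
    rw [← Real.sqrt_sq (norm_nonneg hg.toLp), L2_norm_sq]
    congr 1
    refine integral_congr_ae ?_
    filter_upwards [hg.coeFn_toLp] with t ht
    rw [ht]
  have h3 : ∫ t in Ioo c d, h t * g t = inner ℝ hh.toLp hg.toLp := by
    rw [L2.inner_def]
    refine integral_congr_ae ?_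
    filter_upwards [hg.coeFn_toLp, hh.coeFn_toLp] with t ht ht'
    rw [ht, ht']
    simp [mul_comm]
  rw [Gfun, tikhonov, h1, h2, h3]

end Operator

theorem stmt_8 (a b c d : ℝ) (hab : a < b) (hcd : c < d)
    (hdisj : Disjoint (closure (Ioo a b)) (closure (Ioo c d)))
    (ε : ℝ) (hε : 0 < ε)
    (h : ℝ → ℝ) (hh : Measurable h)
    (hh2 : IntegrableOn (fun x => (h x) ^ 2) (Ioo c d) volume) :
    ∃ gbar : ℝ → ℝ, Measurable gbar ∧
      IntegrableOn (fun t => (gbar t) ^ 2) (Ioo c d) volume ∧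
      (∀ g : ℝ → ℝ, Measurable g → IntegrableOn (fun t => (g t) ^ 2) (Ioo c d) volume →
        Gfun (Ioo a b) (Ioo c d) ε h gbar ≤ Gfun (Ioo a b) (Ioo c d) ε h g) ∧
      (∀ g' : ℝ → ℝ, Measurable g' → IntegrableOn (fun t => (g' t) ^ 2) (Ioo c d) volume →
        (∀ g : ℝ → ℝ, Measurable g → IntegrableOn (fun t => (g t) ^ 2) (Ioo c d) volume →
          Gfun (Ioo a b) (Ioo c d) ε h g' ≤ Gfun (Ioo a b) (Ioo c d) ε h g) →
        ∀ᵐ t ∂(volume.restrict (Ioo c d)), g' t = gbar t) := by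
  obtain ⟨δ, hδ, hsep⟩ := exists_separation hab hcd hdisj
  have hmem : ∀ g : ℝ → ℝ, Measurable g → IntegrableOn (fun t => (g t) ^ 2) (Ioo c d) volume →
      MemLp g 2 (volume.restrict (Ioo c d)) := fun g hg hg2 =>
    (memLp_two_iff_integrable_sq hg.aestronglyMeasurable).2 hg2
  have hhL := hmem h hh hh2
  have hinj := hilbertOp_injective hab hcd hδ hsep
  obtain ⟨u, hu⟩ := tikhonov_exists_min (hilbertOp hδ hsep) hinj hε hhL.toLp
  have hval : Gfun (Ioo a b) (Ioo c d) ε h u = tikhonov (hilbertOp hδ hsep) ε hhL.toLp u := by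
    rw [Gfun_eq_tikhonov hδ hsep ε hhL (Lp.memLp u), Lp.toLp_coeFn]
  refine ⟨u, (Lp.stronglyMeasurable u).measurable, (Lp.memLp u).integrable_sq, ?_, ?_⟩
  · intro g hg hg2
    rw [hval, Gfun_eq_tikhonov hδ hsep ε hhL (hmem g hg hg2)]
    exact hu _
  · intro g' hg' hg2' hmin
    have hgL := hmem g' hg' hg2'
    have heq : hgL.toLp = u := by
      refine tikhonov_min_unique (hilbertOp hδ hsep) hinj hε hhL.toLp (fun z => ?_) hu
      rw [← Gfun_eq_tikhonov hδ hsep ε hhL hgL]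
      refine (hmin u (Lp.stronglyMeasurable u).measurable (Lp.memLp u).integrable_sq).trans ?_
      rw [hval]
      exact hu z
    rw [← heq]
    exact hgL.coeFn_toLp.symm
end

section
/- Let I, J ⊂ ℝ be nonempty bounded open intervals with disjoint closures, let ε > 0 and let h ∈ L²(J). Suppose ḡ ∈ L²(J) minimizes the functional 𝒢_ε(g) := ½ ∫_I ((H_J g)(x))² dx + ε · ‖g‖_{L²(J)} − ∫_J h(x) g(x) dx over all g ∈ L²(J). Then the minimal value satisfies 𝒢_ε(ḡ) = −½ ∫_I ((H_J ḡ)(x))² dx. -/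
/-!
The functional is the sum of a 2-homogeneous term `A / 2`, where `A = ∫_I (H_J ḡ)²`, and of a
positively 1-homogeneous term `B`. Along the ray `s ↦ s • ḡ`, `s ≥ 0`, it equals
`s² A / 2 + s B` and is minimal at the interior point `s = 1`, so the derivative `A + B`
vanishes there and the minimal value is `A / 2 + B = -A / 2`.
-/

open MeasureTheory Set

theorem truncHilbert_const_mul (K : Set ℝ) (f : ℝ → ℝ) (s x : ℝ) :
    truncHilbert K (fun t => s * f t) x = s * truncHilbert K f x := by
  simp only [truncHilbert, mul_div_assoc, integral_const_mul]

theorem Gfun_const_mul (I J : Set ℝ) (ε : ℝ) (h g : ℝ → ℝ) {s : ℝ} (hs : 0 ≤ s) :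
    Gfun I J ε h (fun t => s * g t) =
      s ^ 2 * ((1 / 2) * ∫ x in I, (truncHilbert J g x) ^ 2) +
        s * (ε * Real.sqrt (∫ t in J, (g t) ^ 2) - ∫ t in J, h t * g t) := by
  have h1 : ∀ t, h t * (s * g t) = s * (h t * g t) := fun t => by ring
  simp only [Gfun, truncHilbert_const_mul, mul_pow, h1, integral_const_mul]
  rw [Real.sqrt_mul (sq_nonneg s), Real.sqrt_sq hs]
  ring

/-- First-order condition at `s = 1` for the quadratic `s ↦ s² A / 2 + s B` on `[0, ∞)`. -/
theorem add_eq_zero_of_quadratic_min {A B : ℝ} (hA : 0 ≤ A)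
    (hmin : ∀ s : ℝ, 0 ≤ s → (1 / 2) * A + B ≤ s ^ 2 * ((1 / 2) * A) + s * B) :
    A + B = 0 := by
  by_contra hC
  have hC2 : 0 < (A + B) ^ 2 := by positivity
  set M : ℝ := |A + B| + A + 1 with hM
  have hMpos : 0 < M := by positivity
  -- The step `-(A + B) / M` against the gradient is small enough to keep `s ≥ 0` and to
  -- make the linear decrease dominate the quadratic term.
  have hs : 0 ≤ 1 - (A + B) / M := by
    rw [sub_nonneg, div_le_one hMpos]
    linarith [le_abs_self (A + B)]
  have key := hmin _ hs
  have e : (1 - (A + B) / M) ^ 2 * ((1 / 2) * A) + (1 - (A + B) / M) * B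
      - ((1 / 2) * A + B) = (A + B) ^ 2 / M ^ 2 * (A / 2 - M) := by
    field_simp
    ring
  have hneg : A / 2 - M < 0 := by linarith [abs_nonneg (A + B)]
  have : (A + B) ^ 2 / M ^ 2 * (A / 2 - M) < 0 :=
    mul_neg_of_pos_of_neg (by positivity) hneg
  linarith

theorem stmt_11 (a b c d : ℝ) (hab : a < b) (hcd : c < d)
    (hdisj : Disjoint (closure (Ioo a b)) (closure (Ioo c d)))
    (ε : ℝ) (hε : 0 < ε)
    (h : ℝ → ℝ) (hh : Measurable h)
    (hh2 : IntegrableOn (fun x => (h x) ^ 2) (Ioo c d) volume)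
    (gbar : ℝ → ℝ) (hgbar : Measurable gbar)
    (hgbar2 : IntegrableOn (fun t => (gbar t) ^ 2) (Ioo c d) volume)
    (hmin : ∀ g : ℝ → ℝ, Measurable g → IntegrableOn (fun t => (g t) ^ 2) (Ioo c d) volume →
      Gfun (Ioo a b) (Ioo c d) ε h gbar ≤ Gfun (Ioo a b) (Ioo c d) ε h g) :
    Gfun (Ioo a b) (Ioo c d) ε h gbar =
      -(1 / 2) * ∫ x in Ioo a b, (truncHilbert (Ioo c d) gbar x) ^ 2 := by
  have hA : 0 ≤ ∫ x in Ioo a b, (truncHilbert (Ioo c d) gbar x) ^ 2 :=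
    integral_nonneg fun x => sq_nonneg _
  have h0 := add_eq_zero_of_quadratic_min (B := ε * Real.sqrt (∫ t in Ioo c d, (gbar t) ^ 2)
      - ∫ t in Ioo c d, h t * gbar t) hA fun s hs => by
    have h1 := hmin (fun t => s * gbar t) (hgbar.const_mul s)
      (by simpa only [mul_pow, IntegrableOn] using hgbar2.const_mul (s ^ 2))
    rw [Gfun_const_mul _ _ _ _ _ hs] at h1
    simpa only [Gfun, add_sub_assoc] using h1
  rw [Gfun]
  linarith
end

section
/- Let n ≥ 1, let Ω₁, Ω₂ ⊂ ℝⁿ be nonempty bounded open sets with disjoint closures, and let f ∈ L²(Ω₁). If for every j ∈ {1, …, n} and every x ∈ Ω₂ one has (R_j^{Ω₁} f)(x) = ∫_{Ω₁} f(y) · (x_j − y_j)/|x − y|^{n+1} dy = 0, then f = 0 almost everywhere on Ω₁. -/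
/-!
The set of continuous functions on the compact set `closure Ω₁` that integrate to zero against `f`
is a closed subspace, and it is shown to be everything.

Because `closure Ω₁` stays away from the open set `Ω₂`, one may differentiate under the integral
sign: if `∫ f(y) h(x - y) dy = 0` for all `x ∈ Ω₂`, the same holds for each partial derivative of
`h`. The divergence of the Riesz kernel `z |z|^{-(n+1)}` is `-|z|^{-(n+1)}`, so this kernel
annihilates `f` as well; taking Laplacians repeatedly (a gradient followed by a divergence, with
nonzero constants throughout) gives all kernels `|z|^{-(n+1)-2k}`
(`integral_rpow_sub_nat_eq_zero`). By the Weierstrass theorem in the variable `|x - y|⁻²`, every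
continuous function of `|x - y|` is then orthogonal to `f` for each `x ∈ Ω₂`; only the Gaussians
`exp (-s |x - y|²)` are needed (`integral_gaussian_eq_zero`).

A product of two Gaussians centred in a ball is, up to a constant, a Gaussian centred in the same
ball, by convexity. So the span of Gaussians with centres in a ball inside `Ω₂` is an algebra; it
separates points, and Stone–Weierstrass shows that `f` is orthogonal to all continuous functions
(`ae_eq_zero_of_integral_gaussian`).
-/

open MeasureTheory Set

/-- Unnormalized `j`-th truncated Riesz transform:
`(R_j^Ω f)(x) = ∫_Ω f(y) (x_j - y_j)/|x - y|^{n+1} dy`. -/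
noncomputable def truncRiesz (n : ℕ) (Ω : Set (EuclideanSpace ℝ (Fin n))) (j : Fin n)
    (f : EuclideanSpace ℝ (Fin n) → ℝ) (x : EuclideanSpace ℝ (Fin n)) : ℝ :=
  ∫ y in Ω, f y * (x j - y j) / ‖x - y‖ ^ (n + 1)

open scoped Topology RealInnerProductSpace ContDiff

lemma integrable_mul_of_continuousOn_closure {X : Type*} [TopologicalSpace X] [MeasurableSpace X]
    [OpensMeasurableSpace X] {μ : Measure X} {Ω : Set X} (hΩ : IsOpen Ω)
    (hK : IsCompact (closure Ω)) {f g : X → ℝ}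
    (hf : IntegrableOn f Ω μ) (hg : ContinuousOn g (closure Ω)) :
    IntegrableOn (fun y => f y * g y) Ω μ := by
  obtain ⟨C, hC⟩ := hK.exists_bound_of_continuousOn hg
  have hm : AEStronglyMeasurable g (μ.restrict Ω) :=
    ((hg.mono subset_closure).aemeasurable hΩ.measurableSet).aestronglyMeasurable
  refine Integrable.mul_bdd (c := C) hf hm ?_
  filter_upwards [ae_restrict_mem hΩ.measurableSet] with y hy
  exact hC y (subset_closure hy)

/-- The set of continuous functions on which integration against `f` vanishes is closed under
uniform limits. -/
lemma integral_mul_eq_zero_of_approx {X : Type*} [MeasurableSpace X] {μ : Measure X}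
    {f G : X → ℝ} (hf : Integrable f μ)
    (h : ∀ ε > 0, ∃ g : X → ℝ, Integrable (fun y => f y * g y) μ ∧
      (∀ᵐ y ∂μ, |g y - G y| ≤ ε) ∧ ∫ y, f y * g y ∂μ = 0) :
    ∫ y, f y * G y ∂μ = 0 := by
  by_cases hG : Integrable (fun y => f y * G y) μ
  swap
  · exact integral_undef hG
  have key : ∀ ε > 0, |∫ y, f y * G y ∂μ| ≤ ε * ∫ y, |f y| ∂μ := by
    intro ε hε
    obtain ⟨g, hgi, hgG, hg0⟩ := h ε hε
    have h1 : ∫ y, f y * G y ∂μ = ∫ y, (f y * G y - f y * g y) ∂μ := by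
      rw [integral_sub hG hgi, hg0, sub_zero]
    rw [h1, ← integral_const_mul, ← Real.norm_eq_abs]
    refine norm_integral_le_of_norm_le (hf.abs.const_mul ε) ?_
    filter_upwards [hgG] with y hy
    rw [← mul_sub, Real.norm_eq_abs, abs_mul, abs_sub_comm, mul_comm]
    exact mul_le_mul_of_nonneg_right hy (abs_nonneg _)
  by_contra hne
  have hpos : 0 < |∫ y, f y * G y ∂μ| := abs_pos.mpr hne
  have hI : 0 ≤ ∫ y, |f y| ∂μ := integral_nonneg fun y => abs_nonneg _
  have := key (|∫ y, f y * G y ∂μ| / (2 * (∫ y, |f y| ∂μ + 1))) (by positivity)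
  rw [div_mul_eq_mul_div, le_div_iff₀ (by positivity)] at this
  nlinarith

section

variable {n : ℕ}

/-- If the convolution-type integral of `f` over `Ω₁` against a kernel that is `C¹` off the origin
vanishes on `Ω₂`, then so does the one against any directional derivative of the kernel. -/
lemma integral_fderiv_kernel_eq_zero {Ω₁ Ω₂ : Set (EuclideanSpace ℝ (Fin n))}
    (h₁o : IsOpen Ω₁) (hK : IsCompact (closure Ω₁)) (h₂o : IsOpen Ω₂)
    (hne : ∀ x ∈ Ω₂, ∀ y ∈ closure Ω₁, x - y ≠ 0)
    {f : EuclideanSpace ℝ (Fin n) → ℝ} (hf : IntegrableOn f Ω₁ volume)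
    {h : EuclideanSpace ℝ (Fin n) → ℝ}
    {h' : EuclideanSpace ℝ (Fin n) → EuclideanSpace ℝ (Fin n) →L[ℝ] ℝ}
    (hd : ∀ z, z ≠ 0 → HasFDerivAt h (h' z) z) (hc : ContinuousOn h' {0}ᶜ)
    (h0 : ∀ x ∈ Ω₂, ∫ y in Ω₁, f y * h (x - y) = 0) :
    ∀ x ∈ Ω₂, ∀ v, ∫ y in Ω₁, f y * h' (x - y) v = 0 := by
  intro x hx v
  have hsubc : ∀ x : EuclideanSpace ℝ (Fin n), Continuous fun y => x - y := fun x => by fun_prop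
  have hhc : ContinuousOn h {0}ᶜ := fun z hz => (hd z hz).continuousAt.continuousWithinAt
  have hcx : ∀ x ∈ Ω₂, ContinuousOn (fun y => h (x - y)) (closure Ω₁) := fun x hx =>
    hhc.comp (hsubc x).continuousOn fun y hy => hne x hx y hy
  have hcx' : ContinuousOn (fun y => h' (x - y)) (closure Ω₁) :=
    hc.comp (hsubc x).continuousOn fun y hy => hne x hx y hy
  obtain ⟨ε, hε, hball⟩ := Metric.nhds_basis_closedBall.mem_iff.mp (h₂o.mem_nhds hx)
  have hcomp : IsCompact (Metric.closedBall x ε ×ˢ closure Ω₁) :=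
    (isCompact_closedBall x ε).prod hK
  obtain ⟨C, hC⟩ := hcomp.exists_bound_of_continuousOn
    (f := fun p : EuclideanSpace ℝ (Fin n) × EuclideanSpace ℝ (Fin n) => h' (p.1 - p.2))
    (hc.comp (by fun_prop) fun p hp => hne p.1 (hball hp.1) p.2 hp.2)
  have hm' : AEStronglyMeasurable (fun y => f y • h' (x - y)) (volume.restrict Ω₁) :=
    hf.aestronglyMeasurable.smul
      ((hcx'.mono subset_closure).aestronglyMeasurable h₁o.measurableSet)
  have hbd : Integrable (fun y => |f y| * C) (volume.restrict Ω₁) := hf.abs.mul_const C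
  have hF : HasFDerivAt (fun x => ∫ y in Ω₁, f y * h (x - y))
      (∫ y in Ω₁, f y • h' (x - y)) x := by
    refine hasFDerivAt_integral_of_dominated_of_fderiv_le (𝕜 := ℝ)
      (F' := fun x y => f y • h' (x - y))
      (bound := fun y => |f y| * C) (Metric.closedBall_mem_nhds x hε) ?_ ?_ hm' ?_ hbd ?_
    · filter_upwards [h₂o.mem_nhds hx] with x' hx'
      exact (integrable_mul_of_continuousOn_closure h₁o hK hf (hcx x' hx')).aestronglyMeasurable
    · exact integrable_mul_of_continuousOn_closure h₁o hK hf (hcx x hx)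
    · filter_upwards [ae_restrict_mem h₁o.measurableSet] with y hy x' hx'
      rw [norm_smul, Real.norm_eq_abs]
      exact mul_le_mul_of_nonneg_left (hC (x', y) ⟨hx', subset_closure hy⟩) (abs_nonneg _)
    · filter_upwards [ae_restrict_mem h₁o.measurableSet] with y hy x' hx'
      have := hd (x' - y) (hne x' (hball hx') y (subset_closure hy))
      have hcomp := this.comp x' ((hasFDerivAt_id x').sub_const y)
      rw [ContinuousLinearMap.comp_id] at hcomp
      exact hcomp.const_mul (f y)
  have hzero : (∫ y in Ω₁, f y • h' (x - y)) = 0 := by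
    refine hF.unique ((hasFDerivAt_const (0 : ℝ) x).congr_of_eventuallyEq ?_)
    filter_upwards [h₂o.mem_nhds hx] with x' hx'
    exact h0 x' hx'
  have hint : Integrable (fun y => f y • h' (x - y)) (volume.restrict Ω₁) := by
    refine hbd.mono' hm' ?_
    filter_upwards [ae_restrict_mem h₁o.measurableSet] with y hy
    rw [norm_smul, Real.norm_eq_abs]
    exact mul_le_mul_of_nonneg_left
      (hC (x, y) ⟨Metric.mem_closedBall_self hε.le, subset_closure hy⟩) (abs_nonneg _)
  have := ContinuousLinearMap.integral_apply hint v
  rw [hzero] at this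
  simpa using this.symm

lemma hasFDerivAt_norm_sq_rpow (s : ℝ) {z : EuclideanSpace ℝ (Fin n)} (hz : z ≠ 0) :
    HasFDerivAt (fun z : EuclideanSpace ℝ (Fin n) => (‖z‖ ^ 2) ^ s)
      ((s * (‖z‖ ^ 2) ^ (s - 1)) • ((2 : ℝ) • innerSL ℝ z)) z := by
  have h1 : HasFDerivAt (fun z : EuclideanSpace ℝ (Fin n) => ‖z‖ ^ 2)
      ((2 : ℝ) • innerSL ℝ z) z := by
    simpa [two_smul] using (hasStrictFDerivAt_norm_sq z).hasFDerivAt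
  exact h1.rpow_const (Or.inl (by positivity))

lemma continuousOn_norm_sq_rpow (s : ℝ) :
    ContinuousOn (fun z : EuclideanSpace ℝ (Fin n) => (‖z‖ ^ 2) ^ s) {0}ᶜ := fun _ hz =>
  (hasFDerivAt_norm_sq_rpow s hz).continuousAt.continuousWithinAt

/-- Since the divergence of `z ↦ |z|^{2s} z` is `(n + 2s) |z|^{2s}`, vanishing of the integrals
against the components of this field gives vanishing of the integral against `|z|^{2s}`. -/
lemma integral_rpow_eq_zero_of_coord {Ω₁ Ω₂ : Set (EuclideanSpace ℝ (Fin n))}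
    (h₁o : IsOpen Ω₁) (hK : IsCompact (closure Ω₁)) (h₂o : IsOpen Ω₂)
    (hne : ∀ x ∈ Ω₂, ∀ y ∈ closure Ω₁, x - y ≠ 0)
    {f : EuclideanSpace ℝ (Fin n) → ℝ} (hf : IntegrableOn f Ω₁ volume)
    {s : ℝ} (hs : (n : ℝ) + 2 * s ≠ 0)
    (h0 : ∀ j : Fin n, ∀ x ∈ Ω₂,
      ∫ y in Ω₁, f y * ((x - y) j * (‖x - y‖ ^ 2) ^ s) = 0) :
    ∀ x ∈ Ω₂, ∫ y in Ω₁, f y * (‖x - y‖ ^ 2) ^ s = 0 := by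
  intro x hx
  set D : Fin n → EuclideanSpace ℝ (Fin n) → EuclideanSpace ℝ (Fin n) →L[ℝ] ℝ := fun j z =>
    (z j) • ((s * (‖z‖ ^ 2) ^ (s - 1)) • ((2 : ℝ) • innerSL ℝ z)) +
      ((‖z‖ ^ 2) ^ s) • (EuclideanSpace.proj j : EuclideanSpace ℝ (Fin n) →L[ℝ] ℝ) with hD
  have hDd : ∀ j z, z ≠ 0 →
      HasFDerivAt (fun z : EuclideanSpace ℝ (Fin n) => z j * (‖z‖ ^ 2) ^ s) (D j z) z := by
    intro j z hz
    exact (EuclideanSpace.proj j : EuclideanSpace ℝ (Fin n) →L[ℝ] ℝ).hasFDerivAt.mul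
      (hasFDerivAt_norm_sq_rpow s hz)
  have hDc : ∀ j, ContinuousOn (D j) {0}ᶜ := by
    intro j
    have a := continuousOn_norm_sq_rpow (n := n) s
    have b := continuousOn_norm_sq_rpow (n := n) (s - 1)
    have c : Continuous fun z : EuclideanSpace ℝ (Fin n) => z j := by fun_prop
    have d : Continuous fun z : EuclideanSpace ℝ (Fin n) => innerSL ℝ z := by fun_prop
    exact (c.continuousOn.smul ((b.const_smul s).smul (d.continuousOn.const_smul (2 : ℝ)))).add
      (a.smul continuousOn_const)
  have hz : ∀ j, ∫ y in Ω₁, f y * D j (x - y) (EuclideanSpace.single j 1) = 0 := fun j =>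
    integral_fderiv_kernel_eq_zero h₁o hK h₂o hne hf (hDd j) (hDc j) (h0 j) x hx _
  have hint : ∀ j, IntegrableOn
      (fun y => f y * D j (x - y) (EuclideanSpace.single j 1)) Ω₁ volume := fun j => by
    refine integrable_mul_of_continuousOn_closure h₁o hK hf ?_
    exact ((hDc j).comp (f := fun y => x - y) (by fun_prop) fun y hy => hne x hx y hy).clm_apply
      continuousOn_const
  have hsum : ∫ y in Ω₁, ∑ j, f y * D j (x - y) (EuclideanSpace.single j 1) = 0 := by
    rw [integral_finsetSum _ fun j _ => hint j]
    exact Finset.sum_eq_zero fun j _ => hz j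
  have hdiv : ∫ y in Ω₁, ∑ j, f y * D j (x - y) (EuclideanSpace.single j 1)
      = ∫ y in Ω₁, ((n : ℝ) + 2 * s) * (f y * (‖x - y‖ ^ 2) ^ s) := by
    refine setIntegral_congr_fun h₁o.measurableSet fun y hy => ?_
    have hz0 : x - y ≠ 0 := hne x hx y (subset_closure hy)
    have hpos : 0 < ‖x - y‖ ^ 2 := by positivity
    have hp : (‖x - y‖ ^ 2) ^ s = ‖x - y‖ ^ 2 * (‖x - y‖ ^ 2) ^ (s - 1) := by
      rw [Real.rpow_sub_one hpos.ne']; field_simp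
    have hnorm : ‖x - y‖ ^ 2 = ∑ j, (x - y) j ^ 2 := EuclideanSpace.real_norm_sq_eq _
    have hterm : ∀ j, D j (x - y) (EuclideanSpace.single j 1) =
        2 * s * (‖x - y‖ ^ 2) ^ (s - 1) * (x - y) j ^ 2 + (‖x - y‖ ^ 2) ^ s := by
      intro j
      simp [hD, EuclideanSpace.inner_single_right]
      ring
    simp only [hterm]
    rw [← Finset.mul_sum, Finset.sum_add_distrib, ← Finset.mul_sum, ← hnorm]
    simp only [Finset.sum_const, Finset.card_univ, Fintype.card_fin, nsmul_eq_mul]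
    rw [hp]; ring
  rw [hdiv, integral_const_mul] at hsum
  exact (mul_eq_zero.mp hsum).resolve_left hs

/-- The gradient of `|z|^{2s}` is `2s |z|^{2(s-1)} z`. -/
lemma integral_coord_eq_zero_of_rpow {Ω₁ Ω₂ : Set (EuclideanSpace ℝ (Fin n))}
    (h₁o : IsOpen Ω₁) (hK : IsCompact (closure Ω₁)) (h₂o : IsOpen Ω₂)
    (hne : ∀ x ∈ Ω₂, ∀ y ∈ closure Ω₁, x - y ≠ 0)
    {f : EuclideanSpace ℝ (Fin n) → ℝ} (hf : IntegrableOn f Ω₁ volume)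
    {s : ℝ} (hs : s ≠ 0)
    (h0 : ∀ x ∈ Ω₂, ∫ y in Ω₁, f y * (‖x - y‖ ^ 2) ^ s = 0) (j : Fin n) :
    ∀ x ∈ Ω₂, ∫ y in Ω₁, f y * ((x - y) j * (‖x - y‖ ^ 2) ^ (s - 1)) = 0 := by
  intro x hx
  have hc : ContinuousOn (fun z : EuclideanSpace ℝ (Fin n) =>
      (s * (‖z‖ ^ 2) ^ (s - 1)) • ((2 : ℝ) • innerSL ℝ z)) {0}ᶜ := by
    have b := continuousOn_norm_sq_rpow (n := n) (s - 1)
    have d : Continuous fun z : EuclideanSpace ℝ (Fin n) => innerSL ℝ z := by fun_prop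
    exact (b.const_smul s).smul (d.continuousOn.const_smul (2 : ℝ))
  have key := integral_fderiv_kernel_eq_zero h₁o hK h₂o hne hf
    (fun z hz => hasFDerivAt_norm_sq_rpow s hz) hc h0 x hx (EuclideanSpace.single j 1)
  have heq : ∀ y, f y * ((s * (‖x - y‖ ^ 2) ^ (s - 1)) • ((2 : ℝ) • innerSL ℝ (x - y)))
      (EuclideanSpace.single j 1) =
      (2 * s) * (f y * ((x - y) j * (‖x - y‖ ^ 2) ^ (s - 1))) := by
    intro y
    simp [EuclideanSpace.inner_single_right]
    ring
  simp only [heq] at key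
  rw [integral_const_mul] at key
  exact (mul_eq_zero.mp key).resolve_left (by simpa using hs)

/-- If the Riesz kernels centred in `Ω₂` annihilate `f`, so do all kernels `|x - y|^{-(n+1)-2k}`.
The constants `n + 2s` and `2s` picked up by divergence and gradient never vanish at the exponents
`s = -(n+1)/2 - k`; in particular the first divergence yields the factor `-1`. -/
lemma integral_rpow_sub_nat_eq_zero {Ω₁ Ω₂ : Set (EuclideanSpace ℝ (Fin n))}
    (h₁o : IsOpen Ω₁) (hK : IsCompact (closure Ω₁)) (h₂o : IsOpen Ω₂)
    (hne : ∀ x ∈ Ω₂, ∀ y ∈ closure Ω₁, x - y ≠ 0)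
    {f : EuclideanSpace ℝ (Fin n) → ℝ} (hf : IntegrableOn f Ω₁ volume)
    (h0 : ∀ j : Fin n, ∀ x ∈ Ω₂,
      ∫ y in Ω₁, f y * ((x - y) j * (‖x - y‖ ^ 2) ^ (-((n : ℝ) + 1) / 2)) = 0) (k : ℕ) :
    ∀ x ∈ Ω₂, ∫ y in Ω₁, f y * (‖x - y‖ ^ 2) ^ (-((n : ℝ) + 1) / 2 - k) = 0 := by
  have hn : (0 : ℝ) ≤ n := Nat.cast_nonneg n
  induction k with
  | zero =>
    refine integral_rpow_eq_zero_of_coord h₁o hK h₂o hne hf ?_ ?_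
    · intro h; norm_num at h; linarith
    · simpa using h0
  | succ k ih =>
    have hk : (0 : ℝ) ≤ k := Nat.cast_nonneg k
    have h1 := integral_coord_eq_zero_of_rpow h₁o hK h₂o hne hf (by intro h; linarith) ih
    have he : -((n : ℝ) + 1) / 2 - ((k + 1 : ℕ) : ℝ) = -((n : ℝ) + 1) / 2 - k - 1 := by
      push_cast; ring
    rw [he]
    exact integral_rpow_eq_zero_of_coord h₁o hK h₂o hne hf (by intro h; linarith) h1

/-- If the Riesz kernels centred in `Ω₂` annihilate `f`, so do the Gaussians centred there:
in the variable `u = |x - y|⁻²`, which ranges over a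
compact subset of `(0, ∞)`, the Gaussian is `u^{(n+1)/2}` times a continuous function, and the
latter is a uniform limit of polynomials. -/
lemma integral_gaussian_eq_zero {Ω₁ Ω₂ : Set (EuclideanSpace ℝ (Fin n))}
    (h₁o : IsOpen Ω₁) (hK : IsCompact (closure Ω₁)) (h₂o : IsOpen Ω₂)
    (hne : ∀ x ∈ Ω₂, ∀ y ∈ closure Ω₁, x - y ≠ 0)
    {f : EuclideanSpace ℝ (Fin n) → ℝ} (hf : IntegrableOn f Ω₁ volume)
    (h0 : ∀ j : Fin n, ∀ x ∈ Ω₂,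
      ∫ y in Ω₁, f y * ((x - y) j * (‖x - y‖ ^ 2) ^ (-((n : ℝ) + 1) / 2)) = 0) (s : ℝ) :
    ∀ x ∈ Ω₂, ∫ y in Ω₁, f y * Real.exp (-s * ‖x - y‖ ^ 2) = 0 := by
  intro x hx
  set a : ℝ := -((n : ℝ) + 1) / 2 with ha
  have hcont : ∀ t : ℝ, ContinuousOn (fun y => (‖x - y‖ ^ 2) ^ t) (closure Ω₁) := fun t =>
    (continuousOn_norm_sq_rpow t).comp (f := fun y => x - y) (by fun_prop)
      fun y hy => hne x hx y hy
  -- the weight `f |x - ·|^{2a}`, whose moments in `u = |x - ·|⁻²` vanish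
  have hw : IntegrableOn (fun y => f y * (‖x - y‖ ^ 2) ^ a) Ω₁ volume :=
    integrable_mul_of_continuousOn_closure h₁o hK hf (hcont a)
  have hu : ContinuousOn (fun y => (‖x - y‖ ^ 2)⁻¹) (closure Ω₁) :=
    ContinuousOn.inv₀ (by fun_prop) fun y hy => by
      have := hne x hx y hy
      positivity
  have hpoly : ∀ p : Polynomial ℝ,
      ∫ y in Ω₁, (f y * (‖x - y‖ ^ 2) ^ a) * p.eval (‖x - y‖ ^ 2)⁻¹ = 0 := by
    intro p
    have hmono : ∀ k : ℕ, ∀ y ∈ Ω₁, (f y * (‖x - y‖ ^ 2) ^ a) * ((‖x - y‖ ^ 2)⁻¹) ^ k =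
        f y * (‖x - y‖ ^ 2) ^ (a - k) := by
      intro k y hy
      have := hne x hx y (subset_closure hy)
      rw [Real.rpow_sub (by positivity), Real.rpow_natCast, inv_pow]
      ring
    simp only [Polynomial.eval_eq_sum_range, Finset.mul_sum]
    rw [integral_finsetSum]
    · refine Finset.sum_eq_zero fun k _ => ?_
      have : ∫ y in Ω₁, f y * (‖x - y‖ ^ 2) ^ a * (p.coeff k * ((‖x - y‖ ^ 2)⁻¹) ^ k) =
          ∫ y in Ω₁, p.coeff k * (f y * (‖x - y‖ ^ 2) ^ (a - k)) := by
        refine setIntegral_congr_fun h₁o.measurableSet fun y hy => ?_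
        simp only [← hmono k y hy]
        ring
      rw [this, integral_const_mul,
        integral_rpow_sub_nat_eq_zero h₁o hK h₂o hne hf h0 k x hx, mul_zero]
    · intro k _
      exact integrable_mul_of_continuousOn_closure h₁o hK hw
        (continuousOn_const.mul (hu.pow k))
  have hG : ∫ y in Ω₁, f y * Real.exp (-s * ‖x - y‖ ^ 2) =
      ∫ y in Ω₁, (f y * (‖x - y‖ ^ 2) ^ a) *
        (Real.exp (-s / (‖x - y‖ ^ 2)⁻¹) * ((‖x - y‖ ^ 2)⁻¹) ^ a) := by
    refine setIntegral_congr_fun h₁o.measurableSet fun y hy => ?_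
    have := hne x hx y (subset_closure hy)
    have hpos : 0 < ‖x - y‖ ^ 2 := by positivity
    have hpa : 0 < (‖x - y‖ ^ 2) ^ a := Real.rpow_pos_of_pos hpos a
    simp only [Real.inv_rpow hpos.le, div_inv_eq_mul]
    field_simp
  rw [hG]
  refine integral_mul_eq_zero_of_approx hw fun ε hε => ?_
  -- `[c, d]` is a compact interval in `(0, ∞)` containing all values of `u`
  obtain ⟨c, d, hc, hcd⟩ : ∃ c d : ℝ, 0 < c ∧ ∀ y ∈ closure Ω₁,
      (‖x - y‖ ^ 2)⁻¹ ∈ Icc c d := by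
    obtain ⟨C, hC⟩ := hK.exists_bound_of_continuousOn
      (f := fun y => ‖x - y‖ ^ 2) (by fun_prop)
    obtain ⟨D, hD⟩ := hK.exists_bound_of_continuousOn hu
    refine ⟨(max C 1)⁻¹, D, by positivity, fun y hy => ⟨?_, (le_abs_self _).trans (hD y hy)⟩⟩
    have := hne x hx y hy
    exact inv_anti₀ (by positivity) (((le_abs_self _).trans (hC y hy)).trans (le_max_left _ _))
  have hψ : ContinuousOn (fun u : ℝ => Real.exp (-s / u) * u ^ a) (Icc c d) := by
    have hne0 : ∀ u ∈ Icc c d, u ≠ 0 := fun u hu => (hc.trans_le hu.1).ne'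
    exact (ContinuousOn.div continuousOn_const continuousOn_id hne0).rexp.mul
      (continuousOn_id.rpow_const fun u hu => Or.inl (hne0 u hu))
  obtain ⟨p, hp⟩ := exists_polynomial_near_of_continuousOn c d _ hψ ε hε
  refine ⟨fun y => p.eval (‖x - y‖ ^ 2)⁻¹, ?_, ?_, hpoly p⟩
  · exact integrable_mul_of_continuousOn_closure h₁o hK hw
      (p.continuous.comp_continuousOn hu)
  · filter_upwards [ae_restrict_mem h₁o.measurableSet] with y hy
    exact (hp _ (hcd y (subset_closure hy))).le

/-- An integrable `f` on `Ω₁` that is orthogonal to all Gaussians centred in a ball vanishes: up to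
constant factors those Gaussians are closed under products and they separate points, so
Stone–Weierstrass applies. -/
lemma ae_eq_zero_of_integral_gaussian {Ω₁ : Set (EuclideanSpace ℝ (Fin n))}
    (h₁o : IsOpen Ω₁) (hK : IsCompact (closure Ω₁))
    {f : EuclideanSpace ℝ (Fin n) → ℝ} (hf : IntegrableOn f Ω₁ volume)
    {x₀ : EuclideanSpace ℝ (Fin n)} {r : ℝ} (hr : 0 < r)
    (h0 : ∀ s : ℝ, ∀ x ∈ Metric.ball x₀ r,
      ∫ y in Ω₁, f y * Real.exp (-s * ‖x - y‖ ^ 2) = 0) :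
    ∀ᵐ y ∂(volume.restrict Ω₁), f y = 0 := by
  -- `exp (-s |y|² + 2 s ⟪x, y⟫)` is a constant multiple of `exp (-s |x - y|²)`
  set S : Set C(EuclideanSpace ℝ (Fin n), ℝ) :=
    {g | ∃ s : ℝ, 0 ≤ s ∧ ∃ x ∈ Metric.ball x₀ r,
      ∀ y, g y = Real.exp (-s * ‖y‖ ^ 2 + 2 * s * ⟪x, y⟫)} with hS
  have hSM : ∀ g ∈ Submonoid.closure S, g ∈ S := by
    intro g hg
    induction hg using Submonoid.closure_induction with
    | mem g hg => exact hg
    | one => exact ⟨0, le_rfl, x₀, Metric.mem_ball_self hr, by simp⟩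
    | mul g g' _ _ hg hg' =>
      obtain ⟨s, hs, x, hx, hgx⟩ := hg
      obtain ⟨t, ht, x', hx', hgx'⟩ := hg'
      rcases (add_nonneg hs ht).eq_or_lt with hst | hst
      · obtain rfl : s = 0 := by linarith
        obtain rfl : t = 0 := by linarith
        exact ⟨0, le_rfl, x₀, Metric.mem_ball_self hr, by simp [hgx, hgx']⟩
      · refine ⟨s + t, hst.le, (s / (s + t)) • x + (t / (s + t)) • x',
          convex_ball x₀ r hx hx' (by positivity) (by positivity) (by field_simp), fun y => ?_⟩
        rw [ContinuousMap.mul_apply, hgx, hgx', ← Real.exp_add, inner_add_left,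
          real_inner_smul_left, real_inner_smul_left]
        congr 1
        field_simp
        ring
  have hS0 : ∀ g ∈ S, ∫ y in Ω₁, f y * g y = 0 := by
    rintro g ⟨s, -, x, hx, hg⟩
    have : ∀ y, f y * g y = Real.exp (s * ‖x‖ ^ 2) * (f y * Real.exp (-s * ‖x - y‖ ^ 2)) := by
      intro y
      rw [hg, mul_left_comm, ← Real.exp_add, norm_sub_sq_real]
      congr 2
      ring
    simp only [this]
    rw [integral_const_mul, h0 s x hx, mul_zero]
  have hint : ∀ g : C(EuclideanSpace ℝ (Fin n), ℝ),
      Integrable (fun y => f y * g y) (volume.restrict Ω₁) := fun g =>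
    integrable_mul_of_continuousOn_closure h₁o hK hf g.continuous.continuousOn
  have hA0 : ∀ g ∈ Algebra.adjoin ℝ S, ∫ y in Ω₁, f y * g y = 0 := by
    intro g hg
    rw [← Subalgebra.mem_toSubmodule, Algebra.adjoin_eq_span] at hg
    induction hg using Submodule.span_induction with
    | mem g hg => exact hS0 g (hSM g hg)
    | zero => simp
    | add g g' _ _ hg hg' =>
      simp only [ContinuousMap.add_apply, mul_add]
      rw [integral_add (hint g) (hint g'), hg, hg', add_zero]
    | smul c g _ hg =>
      simp only [ContinuousMap.smul_apply, smul_eq_mul, mul_left_comm _ c]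
      rw [integral_const_mul, hg, mul_zero]
  have hsep : (Algebra.adjoin ℝ S).SeparatesPoints := by
    intro y y' hyy'
    have hmem : ∀ x ∈ Metric.ball x₀ r, ∃ g ∈ Algebra.adjoin ℝ S,
        ∀ y, g y = Real.exp (-1 * ‖y‖ ^ 2 + 2 * 1 * ⟪x, y⟫) := fun x hx =>
      ⟨⟨fun y => Real.exp (-1 * ‖y‖ ^ 2 + 2 * 1 * ⟪x, y⟫), by fun_prop⟩,
        Algebra.subset_adjoin ⟨1, zero_le_one, x, hx, fun _ => rfl⟩, fun _ => rfl⟩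
    by_contra hcon
    have heq : ∀ x ∈ Metric.ball x₀ r,
        -1 * ‖y‖ ^ 2 + 2 * 1 * ⟪x, y⟫ = -1 * ‖y'‖ ^ 2 + 2 * 1 * ⟪x, y'⟫ := by
      intro x hx
      obtain ⟨g, hgA, hg⟩ := hmem x hx
      by_contra hne
      refine hcon ⟨g, ⟨g, hgA, rfl⟩, fun h => hne ?_⟩
      rw [hg, hg] at h
      exact Real.exp_injective h
    have hv : 0 < ‖y - y'‖ := norm_pos_iff.mpr (sub_ne_zero.mpr hyy')
    set t : ℝ := r / (2 * ‖y - y'‖) with ht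
    have htpos : 0 < t := by positivity
    -- comparing the centres `x₀` and `x₀ + t (y - y')` isolates `t |y - y'|²`
    have h1 := heq x₀ (Metric.mem_ball_self hr)
    have h2 := heq (x₀ + t • (y - y')) (by
      rw [Metric.mem_ball, dist_eq_norm, add_sub_cancel_left, norm_smul, Real.norm_eq_abs,
        abs_of_pos htpos, ht]
      field_simp
      linarith)
    rw [inner_add_left, inner_add_left, real_inner_smul_left, real_inner_smul_left] at h2
    have h3 : t * ⟪y - y', y - y'⟫ = 0 := by
      rw [inner_sub_right]; linarith
    rw [real_inner_self_eq_norm_sq] at h3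
    have : 0 < t * ‖y - y'‖ ^ 2 := by positivity
    linarith
  have hall : ∀ g : C(EuclideanSpace ℝ (Fin n), ℝ), ∫ y in Ω₁, f y * g y = 0 := by
    intro g
    refine integral_mul_eq_zero_of_approx hf fun ε hε => ?_
    obtain ⟨g', hg'A, hg'⟩ :=
      ContinuousMap.exists_mem_subalgebra_near_continuous_of_isCompact_of_separatesPoints
        hsep g hK hε
    refine ⟨g', hint g', ?_, hA0 g' hg'A⟩
    filter_upwards [ae_restrict_mem h₁o.measurableSet] with y hy
    exact (hg' y (subset_closure hy)).le
  refine ae_eq_zero_of_integral_contDiff_smul_eq_zero (Integrable.locallyIntegrable hf)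
    fun g hg _ => ?_
  simpa [mul_comm] using hall ⟨g, hg.continuous⟩

end

theorem stmt_14 (n : ℕ) (hn : 1 ≤ n) (Ω₁ Ω₂ : Set (EuclideanSpace ℝ (Fin n)))
    (hΩ₁o : IsOpen Ω₁) (hΩ₁b : Bornology.IsBounded Ω₁) (hΩ₁ne : Ω₁.Nonempty)
    (hΩ₂o : IsOpen Ω₂) (hΩ₂b : Bornology.IsBounded Ω₂) (hΩ₂ne : Ω₂.Nonempty)
    (hdisj : Disjoint (closure Ω₁) (closure Ω₂))
    (f : EuclideanSpace ℝ (Fin n) → ℝ) (hf : Measurable f)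
    (hf2 : IntegrableOn (fun y => (f y) ^ 2) Ω₁ volume)
    (hvanish : ∀ j : Fin n, ∀ x ∈ Ω₂, truncRiesz n Ω₁ j f x = 0) :
    ∀ᵐ y ∂(volume.restrict Ω₁), f y = 0 := by
  have hK : IsCompact (closure Ω₁) := hΩ₁b.isCompact_closure
  have hne : ∀ x ∈ Ω₂, ∀ y ∈ closure Ω₁, x - y ≠ 0 := fun x hx y hy h =>
    disjoint_left.mp hdisj hy (sub_eq_zero.mp h ▸ subset_closure hx)
  have : IsFiniteMeasure (volume.restrict Ω₁) := ⟨by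
    rw [Measure.restrict_apply_univ]; exact hΩ₁b.measure_lt_top⟩
  have hfi : IntegrableOn f Ω₁ volume :=
    ((memLp_two_iff_integrable_sq hf.aestronglyMeasurable).mpr hf2).integrable one_le_two
  have hpow : ∀ z : EuclideanSpace ℝ (Fin n),
      (‖z‖ ^ 2) ^ (-((n : ℝ) + 1) / 2) = (‖z‖ ^ (n + 1))⁻¹ := by
    intro z
    rw [← Real.rpow_natCast ‖z‖ 2, ← Real.rpow_mul (norm_nonneg z), ← Real.rpow_natCast ‖z‖ (n + 1),
      ← Real.rpow_neg (norm_nonneg z)]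
    congr 1
    push_cast
    ring
  have h0 : ∀ j : Fin n, ∀ x ∈ Ω₂,
      ∫ y in Ω₁, f y * ((x - y) j * (‖x - y‖ ^ 2) ^ (-((n : ℝ) + 1) / 2)) = 0 := by
    intro j x hx
    refine Eq.trans ?_ (hvanish j x hx)
    unfold truncRiesz
    congr 1
    ext y
    rw [hpow, PiLp.sub_apply, div_eq_mul_inv, mul_assoc]
  obtain ⟨x₀, hx₀⟩ := hΩ₂ne
  obtain ⟨r, hr, hball⟩ := Metric.isOpen_iff.mp hΩ₂o x₀ hx₀
  exact ae_eq_zero_of_integral_gaussian hΩ₁o hK hfi hr fun s x hx =>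
    integral_gaussian_eq_zero hΩ₁o hK hΩ₂o hne hfi h0 s x (hball hx)
end

section
/- Let n ≥ 1 and let Ω₁, Ω₂ ⊂ ℝⁿ be nonempty bounded open sets with disjoint closures. Then for every measurable h : ℝⁿ → ℝ with ∫_{Ω₂} h(x)² dx < ∞ and every ε > 0 there exist smooth functions f₁, …, f_n : ℝⁿ → ℝ, each with compact support contained in Ω₁, such that ( ∫_{Ω₂} ( h(x) − Σ_{j=1}^{n} (R_j^{Ω₁} f_j)(x) )² dx )^{1/2} < ε. In other words, the linear span of {(R_j^{Ω₁} f) restricted to Ω₂ : f ∈ C_c^∞(Ω₁), j ∈ {1,…,n}} is dense in L²(Ω₂). -/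
/-!
By Hilbert space duality it suffices to show that `g ∈ L²(Ω₂)` orthogonal to all `R_j f`, `f` a
test function in `Ω₁`, is zero. By Fubini (`integral_mul_truncRiesz`) orthogonality says that the
potentials `y ↦ ∫_{Ω₂} g(x) (x_j - y_j) / ‖x - y‖ ^ (n + 1) dx` vanish on `Ω₁`, for every `j`.

These potentials can be differentiated under the integral sign in `Ω₁`, as the closures are
disjoint. An algebraic computation with Euler's identity (`mem_of_isHomogeneous`) shows that the
derivatives of order `k` of the Riesz kernels span all kernels `P(v) / ‖v‖ ^ (n + 1 + 2k)` with `P`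
homogeneous of degree `k + 1`; hence all the corresponding potentials vanish on `Ω₁`
(`potential_eq_zero`). Fix `y ∈ Ω₁`. In the inverted coordinates `z = (x - y) / ‖x - y‖²` this says
that `g(x) / ‖x - y‖ ^ (n + 1)` integrates to zero against every polynomial in `z`
(`integral_inversion_eq_zero`). Inversion is injective, so Stone–Weierstrass on `closure Ω₂` gives
`g = 0` (`ae_eq_zero_of_potential`).

Since only one point `y` is used at the end, no connectedness of the complement of `Ω₂` is needed.
-/

open MeasureTheory Set

/-! ### Kernels `P(v) / ‖v‖ ^ s` and their derivatives -/

open MvPolynomial in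
/-- The polynomial `∑ Xᵢ²`, i.e. `‖v‖²` as a polynomial in the coordinates of `v`. -/
noncomputable def normSqPoly (n : ℕ) : MvPolynomial (Fin n) ℝ := ∑ i, X i ^ 2

open MvPolynomial in
/-- `P(v) / ‖v‖ ^ s`, with the junk value of division at `v = 0`. The `j`-th Riesz kernel is the
case `P = X j`, `s = n + 1`. -/
noncomputable def ratKer (n s : ℕ) (P : MvPolynomial (Fin n) ℝ) (v : EuclideanSpace ℝ (Fin n)) :
    ℝ :=
  eval (fun i => v i) P / ‖v‖ ^ s

open MvPolynomial in
/-- The algebraic core: differentiating `P(v) / ‖v‖ ^ s` in the direction `-eᵢ` replaces `(P, s)` by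
`(s Xᵢ P - N ∂ᵢ P, s + 2)`, where `N = ∑ Xᵢ²`. Starting from the linear forms with `s = n + 1`,
these operations generate all homogeneous polynomials of positive degree. Indeed, with Euler's
identity, for `R` of degree `k` summing over `i` the polynomials obtained from `Xᵢ R` gives
`(k + 1) N R`, and for `Q` of degree `k + 2` summing those obtained from `∂ᵢ Q` gives
`s (k + 2) Q - N ΔQ`. -/
lemma mem_of_isHomogeneous (n : ℕ) (G : ℕ → Submodule ℝ (MvPolynomial (Fin n) ℝ))
    (base : ∀ j, X j ∈ G (n + 1))
    (step : ∀ s P i, P ∈ G s → (s : ℝ) • (X i * P) - normSqPoly n * pderiv i P ∈ G (s + 2))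
    (k : ℕ) : ∀ P : MvPolynomial (Fin n) ℝ, P.IsHomogeneous (k + 1) → P ∈ G (n + 1 + 2 * k) := by
  induction k with
  | zero =>
    intro P hP
    have h1 := hP.sum_X_mul_pderiv
    simp only [zero_add, one_smul] at h1
    rw [← h1]
    refine Submodule.sum_mem _ fun i _ => ?_
    have h2 : (pderiv i P).IsHomogeneous 0 := hP.pderiv
    rw [← totalDegree_zero_iff_isHomogeneous, totalDegree_eq_zero_iff_eq_C] at h2
    rw [h2, mul_comm (X i), ← smul_eq_C_mul]
    exact Submodule.smul_mem _ _ (base i)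
  | succ k ih =>
    intro Q hQ
    have hNR : ∀ R : MvPolynomial (Fin n) ℝ, R.IsHomogeneous k →
        normSqPoly n * R ∈ G (n + 1 + 2 * (k + 1)) := by
      intro R hR
      have h1 : ∀ i : Fin n, ((n + 1 + 2 * k : ℕ) : ℝ) • (X i * (X i * R))
          - normSqPoly n * pderiv i (X i * R) ∈ G (n + 1 + 2 * (k + 1)) := fun i =>
        step _ _ i (ih _ (by rw [add_comm k 1]; exact (isHomogeneous_X ℝ i).mul hR))
      have h2 := Submodule.sum_mem (G (n + 1 + 2 * (k + 1))) (fun i (_ : i ∈ Finset.univ) => h1 i)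
      have h3 : ∑ i : Fin n, (((n + 1 + 2 * k : ℕ) : ℝ) • (X i * (X i * R))
          - normSqPoly n * pderiv i (X i * R)) = ((k + 1 : ℕ) : ℝ) • (normSqPoly n * R) := by
        have h4 := hR.sum_X_mul_pderiv
        have h5 : ∑ i : Fin n, (X i * (X i * R)) = normSqPoly n * R := by
          rw [normSqPoly, Finset.sum_mul]
          exact Finset.sum_congr rfl fun i _ => by ring
        rw [Finset.sum_sub_distrib, ← Finset.smul_sum, h5, ← Finset.mul_sum]
        simp only [pderiv_mul, pderiv_X_self, one_mul, Finset.sum_add_distrib, h4]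
        simp only [Finset.sum_const, Finset.card_univ, Fintype.card_fin, smul_eq_C_mul,
          nsmul_eq_mul, map_natCast]
        push_cast
        ring
      rw [h3] at h2
      exact (Submodule.smul_mem_iff _ (by positivity)).1 h2
    have h1 : ∀ i : Fin n, ((n + 1 + 2 * k : ℕ) : ℝ) • (X i * pderiv i Q)
        - normSqPoly n * pderiv i (pderiv i Q) ∈ G (n + 1 + 2 * (k + 1)) := fun i =>
      step _ _ i (ih _ hQ.pderiv)
    have h2 := Submodule.sum_mem (G (n + 1 + 2 * (k + 1))) (fun i (_ : i ∈ Finset.univ) => h1 i)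
    rw [Finset.sum_sub_distrib, ← Finset.smul_sum, hQ.sum_X_mul_pderiv, ← Finset.mul_sum] at h2
    have h3 : normSqPoly n * ∑ i, pderiv i (pderiv i Q) ∈ G (n + 1 + 2 * (k + 1)) :=
      hNR _ (IsHomogeneous.sum _ _ _ fun i _ => hQ.pderiv.pderiv)
    have h4 := Submodule.add_mem _ h2 h3
    rw [sub_add_cancel, ← Nat.cast_smul_eq_nsmul ℝ, smul_smul] at h4
    exact (Submodule.smul_mem_iff _ (by positivity)).1 h4

lemma eval_normSqPoly (n : ℕ) (v : EuclideanSpace ℝ (Fin n)) :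
    MvPolynomial.eval (fun i => v i) (normSqPoly n) = ‖v‖ ^ 2 := by
  simp [normSqPoly, EuclideanSpace.norm_sq_eq]

open MvPolynomial in
lemma hasDerivAt_eval_line (n : ℕ) (P : MvPolynomial (Fin n) ℝ) (i : Fin n)
    (v : EuclideanSpace ℝ (Fin n)) (t : ℝ) :
    HasDerivAt (fun t : ℝ => eval (fun l => (v - t • EuclideanSpace.single i (1 : ℝ)) l) P)
      (-eval (fun l => (v - t • EuclideanSpace.single i (1 : ℝ)) l) (pderiv i P)) t := by
  induction P using MvPolynomial.induction_on with
  | C a => simpa using hasDerivAt_const t a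
  | add p q hp hq =>
    simp only [map_add, neg_add]
    exact hp.add hq
  | mul_X p j hp =>
    have hX : HasDerivAt (fun t : ℝ => (v - t • EuclideanSpace.single i (1 : ℝ)) j)
        (-(Pi.single i (1 : ℝ) : Fin n → ℝ) j) t := by
      have := ((hasDerivAt_id t).mul_const ((Pi.single i (1 : ℝ) : Fin n → ℝ) j)).const_sub (v j)
      simpa [Pi.single_apply] using this
    have := hp.mul hX
    simp only [map_mul, eval_X, pderiv_mul, map_add, pderiv_X]
    refine this.congr_deriv ?_
    by_cases hij : i = j
    · subst hij; simp; ring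
    · simp [Ne.symm hij]

open MvPolynomial in
lemma hasDerivAt_ratKer (n s : ℕ) (P : MvPolynomial (Fin n) ℝ) (i : Fin n)
    (v : EuclideanSpace ℝ (Fin n)) (t : ℝ)
    (hv : v - t • EuclideanSpace.single i (1 : ℝ) ≠ 0) :
    HasDerivAt (fun t : ℝ => ratKer n s P (v - t • EuclideanSpace.single i (1 : ℝ)))
      (ratKer n (s + 2) ((s : ℝ) • (X i * P) - normSqPoly n * pderiv i P)
        (v - t • EuclideanSpace.single i (1 : ℝ))) t := by
  have h1 := hasDerivAt_eval_line n P i v t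
  have h0 : HasDerivAt (fun t : ℝ => v - t • EuclideanSpace.single i (1 : ℝ))
      (-EuclideanSpace.single i (1 : ℝ)) t := by
    simpa using ((hasDerivAt_id t).smul_const (EuclideanSpace.single i (1 : ℝ))).const_sub v
  have h2 := h0.norm_sq
  have hpos : 0 < ‖v - t • EuclideanSpace.single i (1 : ℝ)‖ := norm_pos_iff.2 hv
  have h3 := (h2.sqrt (by positivity)).pow s
  have h4 := h1.div h3 (by simpa using pow_ne_zero s hpos.ne')
  simp only [Real.sqrt_sq (norm_nonneg _)] at h4
  unfold ratKer
  refine (h4.congr_of_eventuallyEq (Filter.Eventually.of_forall fun u => ?_)).congr_deriv ?_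
  · simp
  · have hin : inner ℝ (v - t • EuclideanSpace.single i (1 : ℝ)) (-EuclideanSpace.single i (1 : ℝ))
        = -((v - t • EuclideanSpace.single i (1 : ℝ)) i) := by
      rw [inner_neg_right, EuclideanSpace.inner_single_right]; simp
    rw [hin, map_sub, map_mul, eval_normSqPoly, smul_eval, map_mul, eval_X]
    simp only [Pi.pow_apply]
    generalize ‖v - t • EuclideanSpace.single i (1 : ℝ)‖ = r at hpos
    generalize (v - t • EuclideanSpace.single i (1 : ℝ)) i = w
    rcases s with _ | s
    · simp; field_simp
    · simp only [Nat.add_sub_cancel]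
      field_simp
      ring

/-! ### Potentials and unique continuation -/

lemma continuousOn_ratKer (n s : ℕ) (P : MvPolynomial (Fin n) ℝ) :
    ContinuousOn (ratKer n s P) {0}ᶜ := by
  unfold ratKer
  refine ContinuousOn.div ?_ (by fun_prop) fun v hv => pow_ne_zero _ (norm_ne_zero_iff.2 hv)
  exact ((MvPolynomial.continuous_eval P).comp (by fun_prop)).continuousOn

lemma measurable_ratKer (n s : ℕ) (P : MvPolynomial (Fin n) ℝ) : Measurable (ratKer n s P) := by
  unfold ratKer
  refine Measurable.div ?_ (by fun_prop)
  exact ((MvPolynomial.continuous_eval P).comp (by fun_prop)).measurable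

lemma exists_bound_ratKer (n s : ℕ) (P : MvPolynomial (Fin n) ℝ)
    {K L : Set (EuclideanSpace ℝ (Fin n))} (hK : IsCompact K) (hL : IsCompact L)
    (hd : Disjoint K L) : ∃ C, ∀ y ∈ K, ∀ x ∈ L, ‖ratKer n s P (x - y)‖ ≤ C := by
  have hc : IsCompact ((fun p : EuclideanSpace ℝ (Fin n) × EuclideanSpace ℝ (Fin n) => p.2 - p.1)
      '' (K ×ˢ L)) := (hK.prod hL).image (by fun_prop)
  obtain ⟨C, hC⟩ := hc.exists_bound_of_continuousOn ((continuousOn_ratKer n s P).mono (by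
    rintro _ ⟨⟨y, x⟩, ⟨hy, hx⟩, rfl⟩ h0
    have h0 : x - y = 0 := h0
    exact disjoint_left.1 hd hy (sub_eq_zero.1 h0 ▸ hx)))
  exact ⟨C, fun y hy x hx => hC _ ⟨(y, x), ⟨hy, hx⟩, rfl⟩⟩

section Potential

variable {n : ℕ} {Ω₁ Ω₂ : Set (EuclideanSpace ℝ (Fin n))} {g : EuclideanSpace ℝ (Fin n) → ℝ}

lemma integrable_mul_ratKer (hb₂ : Bornology.IsBounded Ω₂) (ho₂ : IsOpen Ω₂)
    (hd : Disjoint (closure Ω₁) (closure Ω₂))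
    (hg : IntegrableOn g Ω₂) (s : ℕ) (P : MvPolynomial (Fin n) ℝ)
    {y : EuclideanSpace ℝ (Fin n)} (hy : y ∈ Ω₁) :
    IntegrableOn (fun x => g x * ratKer n s P (x - y)) Ω₂ := by
  obtain ⟨C, hC⟩ := exists_bound_ratKer n s P isCompact_singleton hb₂.isCompact_closure
    (hd.mono_left (singleton_subset_iff.2 (subset_closure hy)))
  refine Integrable.mul_bdd hg
    ((measurable_ratKer n s P).comp (by fun_prop)).aestronglyMeasurable (c := C) ?_
  filter_upwards [ae_restrict_mem ho₂.measurableSet] with x hx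
  exact hC y rfl x (subset_closure hx)

/-- The directional derivative of the potential `y ↦ ∫_{Ω₂} g(x) P(x - y)/‖x - y‖ ^ s dx`. -/
lemma hasDerivAt_potential (hb₁ : Bornology.IsBounded Ω₁) (hb₂ : Bornology.IsBounded Ω₂)
    (ho₁ : IsOpen Ω₁) (ho₂ : IsOpen Ω₂)
    (hd : Disjoint (closure Ω₁) (closure Ω₂))
    (hg : IntegrableOn g Ω₂) (s : ℕ) (P : MvPolynomial (Fin n) ℝ) (i : Fin n)
    {y : EuclideanSpace ℝ (Fin n)} (hy : y ∈ Ω₁) :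
    HasDerivAt (fun t : ℝ => ∫ x in Ω₂, g x *
        ratKer n s P (x - (y + t • EuclideanSpace.single i (1 : ℝ))))
      (∫ x in Ω₂, g x * ratKer n (s + 2)
        ((s : ℝ) • (MvPolynomial.X i * P) - normSqPoly n * MvPolynomial.pderiv i P) (x - y)) 0 := by
  set Q := (s : ℝ) • (MvPolynomial.X i * P) - normSqPoly n * MvPolynomial.pderiv i P with hQ
  obtain ⟨C, hC⟩ := exists_bound_ratKer n (s + 2) Q hb₁.isCompact_closure hb₂.isCompact_closure hd
  have hcont : Continuous fun t : ℝ => y + t • EuclideanSpace.single i (1 : ℝ) := by fun_prop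
  have hnhds : (fun t : ℝ => y + t • EuclideanSpace.single i (1 : ℝ)) ⁻¹' Ω₁ ∈ nhds (0 : ℝ) :=
    hcont.continuousAt.preimage_mem_nhds (by simpa using ho₁.mem_nhds hy)
  have key := hasDerivAt_integral_of_dominated_loc_of_deriv_le (μ := volume.restrict Ω₂)
    (F := fun (t : ℝ) x => g x * ratKer n s P (x - (y + t • EuclideanSpace.single i (1 : ℝ))))
    (F' := fun (t : ℝ) x => g x * ratKer n (s + 2) Q
      (x - (y + t • EuclideanSpace.single i (1 : ℝ))))
    (bound := fun x => ‖g x‖ * C) hnhds ?_ ?_ ?_ ?_ (hg.norm.mul_const C) ?_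
  · simpa using key.2
  · filter_upwards [hnhds] with t ht
    exact (integrable_mul_ratKer hb₂ ho₂ hd hg s P ht).aestronglyMeasurable
  · exact integrable_mul_ratKer hb₂ ho₂ hd hg s P (by simpa using hy)
  · exact (integrable_mul_ratKer hb₂ ho₂ hd hg (s + 2) Q (by simpa using hy)).aestronglyMeasurable
  · filter_upwards [ae_restrict_mem ho₂.measurableSet] with x hx t ht
    rw [norm_mul]
    exact mul_le_mul_of_nonneg_left (hC _ (subset_closure ht) x (subset_closure hx)) (norm_nonneg _)
  · filter_upwards [ae_restrict_mem ho₂.measurableSet] with x hx t ht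
    have hne : x - y - t • EuclideanSpace.single i (1 : ℝ) ≠ 0 := by
      rw [sub_sub, sub_ne_zero]
      rintro rfl
      exact disjoint_left.1 hd (subset_closure ht) (subset_closure hx)
    simpa only [sub_sub] using (hasDerivAt_ratKer n s P i (x - y) t hne).const_mul (g x)

/-- The polynomials `P` for which the potential of `g` with kernel `P(v)/‖v‖ ^ s` vanishes
identically on `Ω₁`. -/
def vanishing (hb₂ : Bornology.IsBounded Ω₂) (ho₂ : IsOpen Ω₂)
    (hd : Disjoint (closure Ω₁) (closure Ω₂)) (hg : IntegrableOn g Ω₂) (s : ℕ) :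
    Submodule ℝ (MvPolynomial (Fin n) ℝ) where
  carrier := {P | ∀ y ∈ Ω₁, ∫ x in Ω₂, g x * ratKer n s P (x - y) = 0}
  add_mem' := by
    intro P Q hP hQ y hy
    have : ∀ x, g x * ratKer n s (P + Q) (x - y)
        = g x * ratKer n s P (x - y) + g x * ratKer n s Q (x - y) := fun x => by
      simp only [ratKer, map_add]; ring
    simp only [this]
    rw [integral_add (integrable_mul_ratKer hb₂ ho₂ hd hg s P hy)
      (integrable_mul_ratKer hb₂ ho₂ hd hg s Q hy), hP y hy, hQ y hy, add_zero]
  zero_mem' := by intro y _; simp [ratKer]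
  smul_mem' := by
    intro c P hP y hy
    have : ∀ x, g x * ratKer n s (c • P) (x - y) = c * (g x * ratKer n s P (x - y)) := fun x => by
      simp only [ratKer, MvPolynomial.smul_eval]; ring
    simp only [this]
    rw [integral_const_mul, hP y hy, mul_zero]

/-- If the Riesz potentials of `g` vanish on `Ω₁`, then so does every potential with kernel
`P(v)/‖v‖ ^ (n + 1 + 2k)`, for `P` homogeneous of degree `k + 1`. -/
lemma potential_eq_zero (hb₁ : Bornology.IsBounded Ω₁) (hb₂ : Bornology.IsBounded Ω₂)
    (ho₁ : IsOpen Ω₁) (ho₂ : IsOpen Ω₂) (hd : Disjoint (closure Ω₁) (closure Ω₂))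
    (hg : IntegrableOn g Ω₂)
    (hR : ∀ j, ∀ y ∈ Ω₁, ∫ x in Ω₂, g x * ratKer n (n + 1) (MvPolynomial.X j) (x - y) = 0)
    (k : ℕ) (P : MvPolynomial (Fin n) ℝ) (hP : P.IsHomogeneous (k + 1))
    {y : EuclideanSpace ℝ (Fin n)} (hy : y ∈ Ω₁) :
    ∫ x in Ω₂, g x * ratKer n (n + 1 + 2 * k) P (x - y) = 0 := by
  refine mem_of_isHomogeneous n (vanishing hb₂ ho₂ hd hg) hR (fun s P i hP y hy => ?_) k P hP y hy
  have h1 := hasDerivAt_potential hb₁ hb₂ ho₁ ho₂ hd hg s P i hy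
  refine h1.unique ((hasDerivAt_const (0 : ℝ) (0 : ℝ)).congr_of_eventuallyEq ?_)
  have hcont : Continuous fun t : ℝ => y + t • EuclideanSpace.single i (1 : ℝ) := by fun_prop
  filter_upwards [hcont.continuousAt.preimage_mem_nhds (x := 0)
    (by simpa using ho₁.mem_nhds hy)] with t ht
  exact hP _ ht

/-- Under the inversion `v ↦ v / ‖v‖²` the kernels `P(v)/‖v‖ ^ (n + 1 + 2k)` become polynomials
times a fixed weight. Multiplying `P` by `N = ∑ Xᵢ²`, which changes the weight to
`‖v‖ ^ (-(n + 1))`, makes every degree available, constants included. -/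
lemma integral_inversion_eq_zero (hb₁ : Bornology.IsBounded Ω₁) (hb₂ : Bornology.IsBounded Ω₂)
    (ho₁ : IsOpen Ω₁) (ho₂ : IsOpen Ω₂) (hd : Disjoint (closure Ω₁) (closure Ω₂))
    (hg : IntegrableOn g Ω₂)
    (hR : ∀ j, ∀ y ∈ Ω₁, ∫ x in Ω₂, g x * ratKer n (n + 1) (MvPolynomial.X j) (x - y) = 0)
    {y : EuclideanSpace ℝ (Fin n)} (hy : y ∈ Ω₁) (P : MvPolynomial (Fin n) ℝ) :
    IntegrableOn (fun x => g x / ‖x - y‖ ^ (n + 1) *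
      MvPolynomial.eval (fun i => (x - y) i / ‖x - y‖ ^ 2) P) Ω₂ ∧
    ∫ x in Ω₂, g x / ‖x - y‖ ^ (n + 1) *
      MvPolynomial.eval (fun i => (x - y) i / ‖x - y‖ ^ 2) P = 0 := by
  induction P using MvPolynomial.induction_on' with
  | monomial u a =>
    have hu := MvPolynomial.isHomogeneous_monomial (R := ℝ) (d := u) a rfl
    have hN : (normSqPoly n * MvPolynomial.monomial u a).IsHomogeneous (u.degree + 1 + 1) := by
      have h2 : (normSqPoly n).IsHomogeneous 2 := by
        refine MvPolynomial.IsHomogeneous.sum _ _ _ fun i _ => ?_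
        exact MvPolynomial.isHomogeneous_X_pow i 2
      have := h2.mul hu
      rwa [add_comm] at this
    have heq : ∀ x ∈ Ω₂, g x * ratKer n (n + 1 + 2 * (u.degree + 1))
          (normSqPoly n * MvPolynomial.monomial u a) (x - y) = g x / ‖x - y‖ ^ (n + 1) *
        MvPolynomial.eval (fun i => (x - y) i / ‖x - y‖ ^ 2) (MvPolynomial.monomial u a) := by
      intro x hx
      have hne : 0 < ‖x - y‖ := by
        rw [norm_pos_iff, sub_ne_zero]
        rintro rfl
        exact disjoint_left.1 hd (subset_closure hy) (subset_closure hx)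
      have hs : MvPolynomial.eval (fun i => (x - y) i / ‖x - y‖ ^ 2) (MvPolynomial.monomial u a)
          = MvPolynomial.eval (fun i => (x - y) i) (MvPolynomial.monomial u a)
            / (‖x - y‖ ^ 2) ^ u.degree := by
        simp only [MvPolynomial.eval_monomial, div_pow, Finsupp.prod, Finset.prod_div_distrib,
          Finset.prod_pow_eq_pow_sum, Finsupp.degree, mul_div_assoc]
        rfl
      rw [ratKer, map_mul, eval_normSqPoly, hs]
      generalize MvPolynomial.eval (fun i => (x - y) i) (MvPolynomial.monomial u a) = w
      field_simp
      ring
    refine ⟨(integrable_mul_ratKer hb₂ ho₂ hd hg _ _ hy).congr_fun heq ho₂.measurableSet, ?_⟩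
    rw [← setIntegral_congr_fun ho₂.measurableSet heq]
    exact potential_eq_zero hb₁ hb₂ ho₁ ho₂ hd hg hR _ _ hN hy
  | add p q hp hq =>
    simp only [map_add, mul_add]
    exact ⟨hp.1.add hq.1, by rw [integral_add hp.1 hq.1, hp.2, hq.2, add_zero]⟩

/-- Unique continuation: if the Riesz potentials of `g` vanish on `Ω₁`, then `g = 0`. By
Stone–Weierstrass, polynomials in the inverted coordinates `(x - y) / ‖x - y‖²` are uniformly dense
in the continuous functions on `closure Ω₂`. -/
lemma ae_eq_zero_of_potential (hb₁ : Bornology.IsBounded Ω₁) (hb₂ : Bornology.IsBounded Ω₂)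
    (ho₁ : IsOpen Ω₁) (ho₂ : IsOpen Ω₂) (hne₁ : Ω₁.Nonempty)
    (hd : Disjoint (closure Ω₁) (closure Ω₂)) (hg : IntegrableOn g Ω₂)
    (hR : ∀ j, ∀ y ∈ Ω₁, ∫ x in Ω₂, g x * ratKer n (n + 1) (MvPolynomial.X j) (x - y) = 0) :
    g =ᵐ[volume.restrict Ω₂] 0 := by
  obtain ⟨y, hy⟩ := hne₁
  set K := closure Ω₂ with hK
  have hKc : IsCompact K := hb₂.isCompact_closure
  have : CompactSpace K := isCompact_iff_compactSpace.1 hKc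
  have hxy : ∀ x ∈ K, 0 < ‖x - y‖ := by
    intro x hx
    rw [norm_pos_iff, sub_ne_zero]
    rintro rfl
    exact disjoint_left.1 hd (subset_closure hy) hx
  let z : Fin n → C(K, ℝ) := fun i =>
    ⟨fun x => ((x : EuclideanSpace ℝ (Fin n)) - y) i / ‖(x : EuclideanSpace ℝ (Fin n)) - y‖ ^ 2,
      Continuous.div (by fun_prop) (by fun_prop) fun x => pow_ne_zero _ (hxy x x.2).ne'⟩
  have hz : ∀ (P : MvPolynomial (Fin n) ℝ) (x : K), (MvPolynomial.aeval z P) x =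
      MvPolynomial.eval (fun i => ((x : EuclideanSpace ℝ (Fin n)) - y) i /
        ‖(x : EuclideanSpace ℝ (Fin n)) - y‖ ^ 2) P := by
    intro P x
    induction P using MvPolynomial.induction_on with
    | C a => simp
    | add p q hp hq => simp [hp, hq]
    | mul_X p j hp =>
      rw [map_mul, map_mul, ContinuousMap.mul_apply, hp, MvPolynomial.aeval_X, MvPolynomial.eval_X]
      rfl
  have hsep : (MvPolynomial.aeval (R := ℝ) z).range.SeparatesPoints := by
    intro a b hab
    by_contra! hcon
    have hi : ∀ i, z i a = z i b := fun i =>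
      hcon _ ⟨z i, ⟨MvPolynomial.X i, by simp⟩, rfl⟩
    refine hab (Subtype.ext ?_)
    have ha := hxy a a.2
    have hb := hxy b b.2
    have hv : (‖(a : EuclideanSpace ℝ (Fin n)) - y‖ ^ 2)⁻¹ • ((a : EuclideanSpace ℝ (Fin n)) - y)
        = (‖(b : EuclideanSpace ℝ (Fin n)) - y‖ ^ 2)⁻¹ • ((b : EuclideanSpace ℝ (Fin n)) - y) := by
      ext i
      have := hi i
      simp only [z, ContinuousMap.coe_mk] at this
      simpa [div_eq_inv_mul] using this
    have hn : ‖(a : EuclideanSpace ℝ (Fin n)) - y‖ = ‖(b : EuclideanSpace ℝ (Fin n)) - y‖ := by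
      have := congrArg norm hv
      simp only [norm_smul, norm_inv, norm_pow, norm_norm] at this
      field_simp at this
      exact this.symm
    rw [hn] at hv
    exact sub_left_injective (smul_right_injective _ (by positivity) hv)
  have hw : IntegrableOn (fun x => g x / ‖x - y‖ ^ (n + 1)) Ω₂ := by
    simpa using (integral_inversion_eq_zero hb₁ hb₂ ho₁ ho₂ hd hg hR hy 1).1
  have main : ∀ φ : EuclideanSpace ℝ (Fin n) → ℝ, Continuous φ →
      ∫ x in Ω₂, φ x * g x = 0 := by
    intro φ hφ
    -- `φ g = (g / ‖x - y‖ ^ (n + 1)) * ψ`, and `ψ` is uniformly approximated by polynomials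
    -- in `z`, against each of which the weighted `g` integrates to zero.
    let ψ : EuclideanSpace ℝ (Fin n) → ℝ := fun x => φ x * ‖x - y‖ ^ (n + 1)
    have hψ : Continuous ψ := by fun_prop
    have hφψ : ∫ x in Ω₂, φ x * g x = ∫ x in Ω₂, g x / ‖x - y‖ ^ (n + 1) * ψ x := by
      refine setIntegral_congr_fun ho₂.measurableSet fun x hx => ?_
      have := hxy x (subset_closure hx)
      simp only [ψ]
      field_simp
    rw [hφψ]
    set I := ∫ x in Ω₂, ‖g x / ‖x - y‖ ^ (n + 1)‖ with hI
    have hI0 : 0 ≤ I := integral_nonneg fun _ => norm_nonneg _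
    obtain ⟨B, hB⟩ := hKc.exists_bound_of_continuousOn hψ.continuousOn
    have hψint : IntegrableOn (fun x => g x / ‖x - y‖ ^ (n + 1) * ψ x) Ω₂ := by
      refine Integrable.mul_bdd hw hψ.aestronglyMeasurable (c := B) ?_
      filter_upwards [ae_restrict_mem ho₂.measurableSet] with x hx
      exact hB x (subset_closure hx)
    have hle : ∀ δ > 0, ‖∫ x in Ω₂, g x / ‖x - y‖ ^ (n + 1) * ψ x‖ ≤ I * δ := by
      intro δ hδ
      obtain ⟨⟨_, P, rfl⟩, hP⟩ :=
        ContinuousMap.exists_mem_subalgebra_near_continuous_of_separatesPoints _ hsep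
          (fun x : K => ψ x) (by fun_prop) δ hδ
      obtain ⟨hPi, hP0⟩ := integral_inversion_eq_zero hb₁ hb₂ ho₁ ho₂ hd hg hR hy P
      rw [← sub_zero (∫ x in Ω₂, g x / ‖x - y‖ ^ (n + 1) * ψ x), ← hP0,
        ← integral_sub hψint hPi, hI, ← integral_mul_const]
      refine norm_integral_le_of_norm_le (hw.norm.mul_const δ) ?_
      filter_upwards [ae_restrict_mem ho₂.measurableSet] with x hx
      rw [← mul_sub, norm_mul]
      refine mul_le_mul_of_nonneg_left ?_ (norm_nonneg _)
      have := hP ⟨x, subset_closure hx⟩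
      rw [norm_sub_rev]
      refine le_trans (le_of_eq ?_) this.le
      congr 2
      exact (hz P ⟨x, subset_closure hx⟩).symm
    refine norm_le_zero_iff.1 (le_of_forall_pos_le_add fun η hη => ?_)
    refine (hle (η / (I + 1)) (by positivity)).trans ?_
    rw [zero_add, mul_div_assoc', div_le_iff₀ (by positivity)]
    nlinarith
  have := ho₂.ae_eq_zero_of_integral_contDiff_smul_eq_zero (μ := volume) hg.locallyIntegrableOn
    fun φ hφ _ hsupp => by
      rw [← main φ hφ.continuous, setIntegral_eq_integral_of_forall_compl_eq_zero]
      · rfl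
      · intro x hx
        rw [image_eq_zero_of_notMem_tsupport fun h => hx (hsupp h), zero_mul]
  exact (ae_restrict_iff' ho₂.measurableSet).2 this

end Potential

/-! ### The transforms as maps into `L²(Ω₂)` -/

section Transform

variable {n : ℕ} {Ω₁ Ω₂ : Set (EuclideanSpace ℝ (Fin n))}

lemma truncRiesz_eq (j : Fin n) (f : EuclideanSpace ℝ (Fin n) → ℝ) (x : EuclideanSpace ℝ (Fin n)) :
    truncRiesz n Ω₁ j f x =
      ∫ y in Ω₁, f y * ratKer n (n + 1) (MvPolynomial.X j) (x - y) := by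
  simp [truncRiesz, ratKer, mul_div_assoc]

lemma integrable_riesz (hb₁ : Bornology.IsBounded Ω₁) (ho₁ : IsOpen Ω₁)
    (hd : Disjoint (closure Ω₁) (closure Ω₂)) (j : Fin n)
    {f : EuclideanSpace ℝ (Fin n) → ℝ} (hf : IntegrableOn f Ω₁)
    {x : EuclideanSpace ℝ (Fin n)} (hx : x ∈ Ω₂) :
    IntegrableOn (fun y => f y * ratKer n (n + 1) (MvPolynomial.X j) (x - y)) Ω₁ := by
  obtain ⟨C, hC⟩ := exists_bound_ratKer n (n + 1) (MvPolynomial.X j) hb₁.isCompact_closure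
    isCompact_singleton (hd.mono_right (singleton_subset_iff.2 (subset_closure hx)))
  refine Integrable.mul_bdd hf
    ((measurable_ratKer n _ _).comp (by fun_prop)).aestronglyMeasurable (c := C) ?_
  filter_upwards [ae_restrict_mem ho₁.measurableSet] with y hy
  exact hC y (subset_closure hy) x rfl

lemma integrable_prod_riesz (hb₁ : Bornology.IsBounded Ω₁) (hb₂ : Bornology.IsBounded Ω₂)
    (ho₁ : IsOpen Ω₁) (ho₂ : IsOpen Ω₂)
    (hd : Disjoint (closure Ω₁) (closure Ω₂)) (j : Fin n)
    {f g : EuclideanSpace ℝ (Fin n) → ℝ} (hf : IntegrableOn f Ω₁) (hg : IntegrableOn g Ω₂) :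
    Integrable (fun p : EuclideanSpace ℝ (Fin n) × EuclideanSpace ℝ (Fin n) =>
      g p.1 * f p.2 * ratKer n (n + 1) (MvPolynomial.X j) (p.1 - p.2))
      ((volume.restrict Ω₂).prod (volume.restrict Ω₁)) := by
  obtain ⟨C, hC⟩ := exists_bound_ratKer n (n + 1) (MvPolynomial.X j) hb₁.isCompact_closure
    hb₂.isCompact_closure hd
  refine Integrable.mul_bdd (hg.mul_prod hf)
    ((measurable_ratKer n _ _).comp (by fun_prop)).aestronglyMeasurable (c := C) ?_
  rw [Measure.prod_restrict]
  filter_upwards [ae_restrict_mem (ho₂.measurableSet.prod ho₁.measurableSet)] with p hp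
  exact hC _ (subset_closure hp.2) _ (subset_closure hp.1)

lemma memLp_truncRiesz (hb₁ : Bornology.IsBounded Ω₁) (hb₂ : Bornology.IsBounded Ω₂)
    (ho₁ : IsOpen Ω₁) (ho₂ : IsOpen Ω₂)
    (hd : Disjoint (closure Ω₁) (closure Ω₂)) (j : Fin n)
    {f : EuclideanSpace ℝ (Fin n) → ℝ} (hf : IntegrableOn f Ω₁) :
    MemLp (truncRiesz n Ω₁ j f) 2 (volume.restrict Ω₂) := by
  have : IsFiniteMeasure (volume.restrict Ω₂) := ⟨by simpa using hb₂.measure_lt_top⟩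
  obtain ⟨C, hC⟩ := exists_bound_ratKer n (n + 1) (MvPolynomial.X j) hb₁.isCompact_closure
    hb₂.isCompact_closure hd
  refine MemLp.of_bound ?_ (∫ y in Ω₁, ‖f y‖ * C) ?_
  · have := (integrable_prod_riesz hb₁ hb₂ ho₁ ho₂ hd j hf
      (integrable_const (1 : ℝ) : Integrable _ (volume.restrict Ω₂))).aestronglyMeasurable
    have := this.integral_prod_right'
    simp only [one_mul] at this
    simpa only [← truncRiesz_eq] using this
  · filter_upwards [ae_restrict_mem ho₂.measurableSet] with x hx
    rw [truncRiesz_eq]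
    refine norm_integral_le_of_norm_le (hf.norm.mul_const C) ?_
    filter_upwards [ae_restrict_mem ho₁.measurableSet] with y hy
    rw [norm_mul]
    exact mul_le_mul_of_nonneg_left (hC y (subset_closure hy) x (subset_closure hx)) (norm_nonneg _)

/-- Fubini: the transpose of the Riesz transform from `Ω₁` to `Ω₂`. -/
lemma integral_mul_truncRiesz (hb₁ : Bornology.IsBounded Ω₁) (hb₂ : Bornology.IsBounded Ω₂)
    (ho₁ : IsOpen Ω₁) (ho₂ : IsOpen Ω₂)
    (hd : Disjoint (closure Ω₁) (closure Ω₂)) (j : Fin n)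
    {f g : EuclideanSpace ℝ (Fin n) → ℝ} (hf : IntegrableOn f Ω₁) (hg : IntegrableOn g Ω₂) :
    ∫ x in Ω₂, g x * truncRiesz n Ω₁ j f x =
      ∫ y in Ω₁, f y * ∫ x in Ω₂, g x * ratKer n (n + 1) (MvPolynomial.X j) (x - y) := by
  simp only [truncRiesz_eq, ← integral_const_mul]
  refine (integral_integral_swap ?_).trans ?_
  · refine (integrable_prod_riesz hb₁ hb₂ ho₁ ho₂ hd j hf hg).congr
      (Filter.Eventually.of_forall fun p => ?_)
    simp only [Function.uncurry]
    ring
  · simp only [mul_left_comm]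

/-- Orthogonality to all `R_j f` with `f` a test function in `Ω₁` forces `g = 0`. -/
lemma ae_eq_zero_of_orthogonal (hb₁ : Bornology.IsBounded Ω₁) (hb₂ : Bornology.IsBounded Ω₂)
    (ho₁ : IsOpen Ω₁) (ho₂ : IsOpen Ω₂) (hne₁ : Ω₁.Nonempty)
    (hd : Disjoint (closure Ω₁) (closure Ω₂)) {g : EuclideanSpace ℝ (Fin n) → ℝ}
    (hg : IntegrableOn g Ω₂)
    (horth : ∀ j (f : EuclideanSpace ℝ (Fin n) → ℝ), ContDiff ℝ (⊤ : ℕ∞) f → HasCompactSupport f →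
      tsupport f ⊆ Ω₁ → ∫ x in Ω₂, g x * truncRiesz n Ω₁ j f x = 0) :
    g =ᵐ[volume.restrict Ω₂] 0 := by
  refine ae_eq_zero_of_potential hb₁ hb₂ ho₁ ho₂ hne₁ hd hg fun j => ?_
  set G : EuclideanSpace ℝ (Fin n) → ℝ := fun y =>
    ∫ x in Ω₂, g x * ratKer n (n + 1) (MvPolynomial.X j) (x - y) with hG
  have hGc : ContinuousOn G Ω₁ := by
    obtain ⟨C, hC⟩ := exists_bound_ratKer n (n + 1) (MvPolynomial.X j) hb₁.isCompact_closure
      hb₂.isCompact_closure hd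
    refine continuousOn_of_dominated (bound := fun x => ‖g x‖ * C) (fun y hy =>
      (integrable_mul_ratKer hb₂ ho₂ hd hg _ _ hy).aestronglyMeasurable) (fun y hy => ?_)
      (hg.norm.mul_const C) ?_
    · filter_upwards [ae_restrict_mem ho₂.measurableSet] with x hx
      rw [norm_mul]
      exact mul_le_mul_of_nonneg_left (hC y (subset_closure hy) x (subset_closure hx))
        (norm_nonneg _)
    · filter_upwards [ae_restrict_mem ho₂.measurableSet] with x hx
      refine continuousOn_const.mul ((continuousOn_ratKer n _ _).comp (by fun_prop) fun y hy h0 => ?_)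
      have h0 : x - y = 0 := h0
      exact disjoint_left.1 hd (subset_closure hy) (sub_eq_zero.1 h0 ▸ subset_closure hx)
  have hae : ∀ᵐ y, y ∈ Ω₁ → G y = 0 := by
    refine ho₁.ae_eq_zero_of_integral_contDiff_smul_eq_zero
      (hGc.locallyIntegrableOn ho₁.measurableSet) fun f hf hfc hfs => ?_
    rw [← horth j f hf hfc hfs, integral_mul_truncRiesz hb₁ hb₂ ho₁ ho₂ hd j
      (hf.continuous.integrable_of_hasCompactSupport hfc).integrableOn hg,
      setIntegral_eq_integral_of_forall_compl_eq_zero]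
    · rfl
    · intro y hy
      rw [image_eq_zero_of_notMem_tsupport fun h => hy (hfs h), zero_mul]
  exact Measure.eqOn_open_of_ae_eq (g := fun _ => 0) (μ := volume)
    ((ae_restrict_iff' ho₁.measurableSet).2 hae) ho₁ hGc continuousOn_const

lemma truncRiesz_add_smul (hb₁ : Bornology.IsBounded Ω₁) (ho₁ : IsOpen Ω₁)
    (hd : Disjoint (closure Ω₁) (closure Ω₂)) (j : Fin n)
    {f f' : EuclideanSpace ℝ (Fin n) → ℝ} (hf : IntegrableOn f Ω₁) (hf' : IntegrableOn f' Ω₁)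
    (c : ℝ) {x : EuclideanSpace ℝ (Fin n)} (hx : x ∈ Ω₂) :
    truncRiesz n Ω₁ j (f + c • f') x = truncRiesz n Ω₁ j f x + c * truncRiesz n Ω₁ j f' x := by
  simp only [truncRiesz_eq]
  rw [← integral_const_mul, ← integral_add (integrable_riesz hb₁ ho₁ hd j hf hx)
    ((integrable_riesz hb₁ ho₁ hd j hf' hx).const_mul c)]
  simp only [Pi.add_apply, Pi.smul_apply, smul_eq_mul]
  congr 1
  ext y
  ring

/-- Smooth functions on `ℝⁿ` with compact support contained in `Ω`. -/
def testFun (Ω : Set (EuclideanSpace ℝ (Fin n))) :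
    Submodule ℝ (EuclideanSpace ℝ (Fin n) → ℝ) where
  carrier := {f | ContDiff ℝ (⊤ : ℕ∞) f ∧ HasCompactSupport f ∧ tsupport f ⊆ Ω}
  add_mem' := fun ha hb => ⟨ha.1.add hb.1, ha.2.1.add hb.2.1,
    (tsupport_add _ _).trans (union_subset ha.2.2 hb.2.2)⟩
  zero_mem' := ⟨contDiff_const, HasCompactSupport.zero, by simp [tsupport]⟩
  smul_mem' := fun c f hf => ⟨hf.1.const_smul c, hf.2.1.smul_left,
    (closure_mono (Function.support_const_smul_subset c f)).trans hf.2.2⟩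

lemma integrableOn_testFun {Ω : Set (EuclideanSpace ℝ (Fin n))} {f : EuclideanSpace ℝ (Fin n) → ℝ}
    (hf : f ∈ testFun Ω) : IntegrableOn f Ω :=
  (hf.1.continuous.integrable_of_hasCompactSupport hf.2.1).integrableOn

/-- The map `f ↦ R_j f` from test functions in `Ω₁` to `L²(Ω₂)`. -/
noncomputable def rieszLp (hb₁ : Bornology.IsBounded Ω₁) (hb₂ : Bornology.IsBounded Ω₂)
    (ho₁ : IsOpen Ω₁) (ho₂ : IsOpen Ω₂)
    (hd : Disjoint (closure Ω₁) (closure Ω₂)) (j : Fin n) :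
    testFun Ω₁ →ₗ[ℝ] Lp ℝ 2 (volume.restrict Ω₂) where
  toFun f := (memLp_truncRiesz hb₁ hb₂ ho₁ ho₂ hd j (integrableOn_testFun f.2)).toLp
  map_add' f f' := by
    rw [← MemLp.toLp_add, MemLp.toLp_eq_toLp_iff]
    filter_upwards [ae_restrict_mem ho₂.measurableSet] with x hx
    have := truncRiesz_add_smul hb₁ ho₁ hd j (integrableOn_testFun f.2)
      (integrableOn_testFun f'.2) 1 hx
    simpa using this
  map_smul' c f := by
    rw [← MemLp.toLp_const_smul, MemLp.toLp_eq_toLp_iff]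
    filter_upwards with x
    simp [truncRiesz_eq, mul_assoc, integral_const_mul]

end Transform

theorem stmt_15 (n : ℕ) (hn : 1 ≤ n) (Ω₁ Ω₂ : Set (EuclideanSpace ℝ (Fin n)))
    (hΩ₁o : IsOpen Ω₁) (hΩ₁b : Bornology.IsBounded Ω₁) (hΩ₁ne : Ω₁.Nonempty)
    (hΩ₂o : IsOpen Ω₂) (hΩ₂b : Bornology.IsBounded Ω₂) (hΩ₂ne : Ω₂.Nonempty)
    (hdisj : Disjoint (closure Ω₁) (closure Ω₂))
    (h : EuclideanSpace ℝ (Fin n) → ℝ) (hh : Measurable h)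
    (hh2 : IntegrableOn (fun x => (h x) ^ 2) Ω₂ volume)
    (ε : ℝ) (hε : 0 < ε) :
    ∃ f : Fin n → EuclideanSpace ℝ (Fin n) → ℝ,
      (∀ j, ContDiff ℝ (⊤ : ℕ∞) (f j)) ∧ (∀ j, HasCompactSupport (f j)) ∧
      (∀ j, tsupport (f j) ⊆ Ω₁) ∧
      Real.sqrt (∫ x in Ω₂, (h x - ∑ j : Fin n, truncRiesz n Ω₁ j (f j) x) ^ 2) < ε := by
  have hfin : IsFiniteMeasure (volume.restrict Ω₂) := ⟨by simpa using hΩ₂b.measure_lt_top⟩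
  let R := rieszLp hΩ₁b hΩ₂b hΩ₁o hΩ₂o hdisj
  let T : (Fin n → testFun Ω₁) →ₗ[ℝ] Lp ℝ 2 (volume.restrict Ω₂) :=
    ∑ j, (R j).comp (LinearMap.proj j)
  have hR : ∀ j (f : testFun Ω₁), R j f =ᵐ[volume.restrict Ω₂] truncRiesz n Ω₁ j f := fun j f =>
    (memLp_truncRiesz hΩ₁b hΩ₂b hΩ₁o hΩ₂o hdisj j (integrableOn_testFun f.2)).coeFn_toLp
  have hdense : (LinearMap.range T).topologicalClosure = ⊤ := by
    rw [Submodule.topologicalClosure_eq_top_iff, Submodule.eq_bot_iff]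
    intro g hg
    rw [Lp.eq_zero_iff_ae_eq_zero]
    refine ae_eq_zero_of_orthogonal hΩ₁b hΩ₂b hΩ₁o hΩ₂o hΩ₁ne hdisj
      ((Lp.memLp g).integrable (by norm_num)) fun j f hf hfc hfs => ?_
    have hT : T (Pi.single j ⟨f, hf, hfc, hfs⟩) = R j ⟨f, hf, hfc, hfs⟩ := by
      simp only [T, LinearMap.sum_apply, LinearMap.comp_apply, LinearMap.proj_apply]
      rw [Finset.sum_eq_single j (fun i _ hi => by simp [hi]) (by simp), Pi.single_eq_same]
    have h0 := (Submodule.mem_orthogonal _ g).1 hg _ ⟨Pi.single j ⟨f, hf, hfc, hfs⟩, rfl⟩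
    rw [hT, L2.inner_def] at h0
    rw [← h0]
    refine integral_congr_ae ?_
    filter_upwards [hR j ⟨f, hf, hfc, hfs⟩] with x hx
    rw [hx]
    simp
  have hhL : MemLp h 2 (volume.restrict Ω₂) :=
    (memLp_two_iff_integrable_sq hh.aestronglyMeasurable).2 hh2
  have hmem : hhL.toLp ∈ closure (LinearMap.range T : Set (Lp ℝ 2 (volume.restrict Ω₂))) := by
    rw [← Submodule.topologicalClosure_coe, hdense]
    trivial
  obtain ⟨_, ⟨f, rfl⟩, hdist⟩ := Metric.mem_closure_iff.1 hmem ε hε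
  refine ⟨fun j => f j, fun j => (f j).2.1, fun j => (f j).2.2.1, fun j => (f j).2.2.2, ?_⟩
  have hTf : T f =ᵐ[volume.restrict Ω₂] fun x => ∑ j, truncRiesz n Ω₁ j (f j) x := by
    have h1 : T f = ∑ j, R j (f j) := by simp [T]
    rw [h1]
    refine (Lp.coeFn_finsetSum _ _).trans ?_
    filter_upwards [ae_all_iff.2 fun j => hR j (f j)] with x hx
    simp [hx]
  have hsq : ∫ x in Ω₂, (h x - ∑ j : Fin n, truncRiesz n Ω₁ j (f j) x) ^ 2
      = ‖hhL.toLp - T f‖ ^ 2 := by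
    rw [← real_inner_self_eq_norm_sq, L2.inner_def]
    refine integral_congr_ae ?_
    filter_upwards [hTf, hhL.coeFn_toLp, Lp.coeFn_sub hhL.toLp (T f)] with x h1 h2 h3
    rw [h3, Pi.sub_apply, h1, h2]
    simp [sq]
  rw [hsq, Real.sqrt_sq (norm_nonneg _), ← dist_eq_norm]
  exact hdist
end
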